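/- Interior weak Harnack inequality. For every integer n ≥ 2, reals 0 < λ ≤ Λ, exponents q > n and p with n ≤ p ≤ q, and K > 0, there exist constants ε > 0, c > 0, C > 0 such that the following holds. Let b, f : B₂ → ℝ be continuous with b ≥ 0 and ‖b‖_{L^q(B₂)} ≤ K, and let u be a C² function on B₂ with u ≥ 0 such that 𝓜⁻(D²u(x)) − b(x)|Du(x)| ≤ f(x) for all x ∈ B₂. Then c·(∫_{B₁} u(x)^ε dx)^{1/ε} ≤ inf_{x ∈ B₁} u(x) + C·‖f⁺‖_{L^p(B₂)}. -/

import Mathlib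

open MeasureTheory
open scoped ENNReal

/-- The Pucci minimal extremal operator `𝓜⁻(M)` with ellipticity constants `lam ≤ Lam`:
the infimum of `tr(A*M)` over symmetric matrices `A` with `lam•I ≤ A ≤ Lam•I`. -/
noncomputable def pucciMinus (n : ℕ) (lam Lam : ℝ) (M : Matrix (Fin n) (Fin n) ℝ) : ℝ :=
  sInf { t : ℝ | ∃ A : Matrix (Fin n) (Fin n) ℝ, A.IsSymm ∧
    (A - lam • (1 : Matrix (Fin n) (Fin n) ℝ)).PosSemidef ∧
    (Lam • (1 : Matrix (Fin n) (Fin n) ℝ) - A).PosSemidef ∧ t = (A * M).trace }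

/-- The Pucci maximal extremal operator `𝓜⁺(M)`. -/
noncomputable def pucciPlus (n : ℕ) (lam Lam : ℝ) (M : Matrix (Fin n) (Fin n) ℝ) : ℝ :=
  sSup { t : ℝ | ∃ A : Matrix (Fin n) (Fin n) ℝ, A.IsSymm ∧
    (A - lam • (1 : Matrix (Fin n) (Fin n) ℝ)).PosSemidef ∧
    (Lam • (1 : Matrix (Fin n) (Fin n) ℝ) - A).PosSemidef ∧ t = (A * M).trace }

/-- The Hessian matrix `D²u(x)` of `u` at `x`. -/
noncomputable def hess (n : ℕ) (u : EuclideanSpace ℝ (Fin n) → ℝ)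
    (x : EuclideanSpace ℝ (Fin n)) : Matrix (Fin n) (Fin n) ℝ :=
  fun i j => fderiv ℝ (fun y => fderiv ℝ u y (EuclideanSpace.single j (1 : ℝ))) x
    (EuclideanSpace.single i (1 : ℝ))

/-- The euclidean norm `|Du(x)|` of the gradient of `u` at `x`. -/
noncomputable def gradNorm (n : ℕ) (u : EuclideanSpace ℝ (Fin n) → ℝ)
    (x : EuclideanSpace ℝ (Fin n)) : ℝ := ‖fderiv ℝ u x‖

/-- The `L^p` norm `(∫_E |g|^p)^(1/p)`, as a Lebesgue integral valued in `[0,∞]`. -/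
noncomputable def LpNormE (n : ℕ) (p : ℝ) (g : EuclideanSpace ℝ (Fin n) → ℝ)
    (E : Set (EuclideanSpace ℝ (Fin n))) : ℝ≥0∞ :=
  (∫⁻ x in E, ENNReal.ofReal (|g x| ^ p)) ^ (1 / p)

/-- The last (`n`-th) coordinate `x_n` of a point of `ℝⁿ`. -/
def lastC (n : ℕ) (hn : 1 ≤ n) (x : EuclideanSpace ℝ (Fin n)) : ℝ := x ⟨n - 1, by omega⟩

/-- The open half-ball `B_R⁺ = {|x| < R, x_n > 0}`. -/
def halfBall (n : ℕ) (hn : 1 ≤ n) (R : ℝ) : Set (EuclideanSpace ℝ (Fin n)) :=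
  {x | ‖x‖ < R ∧ 0 < lastC n hn x}

/-- The flat boundary part `B_R⁰ = {|x| ≤ R, x_n = 0}`. -/
def flatB (n : ℕ) (hn : 1 ≤ n) (R : ℝ) : Set (EuclideanSpace ℝ (Fin n)) :=
  {x | ‖x‖ ≤ R ∧ lastC n hn x = 0}

/-- The norm `‖g‖_{L^{p,q}(B_R⁺)} = ‖g‖_{L^p(B_R⁺)} + ‖g‖_{L^q(B_R⁺ ∩ {x_n < d0})}`. -/
noncomputable def LpqNormHB (n : ℕ) (hn : 1 ≤ n) (p q d0 R : ℝ)
    (g : EuclideanSpace ℝ (Fin n) → ℝ) : ℝ≥0∞ :=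
  LpNormE n p g (halfBall n hn R) +
    LpNormE n q g {x ∈ halfBall n hn R | lastC n hn x < d0}

/-- The open cube `Q_ρ` of side `ρ` centered at `(0,…,0,ρ/2)`. -/
def cubeQ (n : ℕ) (hn : 1 ≤ n) (ρ : ℝ) : Set (EuclideanSpace ℝ (Fin n)) :=
  {x | (∀ i : Fin n, i.1 ≠ n - 1 → |x i| < ρ / 2) ∧ 0 < lastC n hn x ∧ lastC n hn x < ρ}

/-- The norm `‖g‖_{L^{p,q}(Q₂)} = ‖g‖_{L^p(Q₂)} + ‖g‖_{L^q(Q₂ ∩ {x_n < d0})}`. -/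
noncomputable def LpqNormQ (n : ℕ) (hn : 1 ≤ n) (p q d0 : ℝ)
    (g : EuclideanSpace ℝ (Fin n) → ℝ) : ℝ≥0∞ :=
  LpNormE n p g (cubeQ n hn 2) +
    LpNormE n q g {x ∈ cubeQ n hn 2 | lastC n hn x < d0}

/-!
If `u ≤ t` at a point of the ball of radius `2r` about `z`, subtract from `u` a barrier `φ`, built
from a Gaussian bump, that is at least `3t` on that ball, vanishes on the sphere of radius `3r`
and is a subsolution of every elliptic operator off the ball of radius `r`. Then `w = u - φ` is at
most `-2t` somewhere but nonnegative on the sphere, so every slope of size less than `t / (6r)` is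
that of an affine function touching `w` from below (Alexandrov-Bakelman-Pucci). The gradient
therefore maps the contact set onto a ball; the area formula and `det ≤ (tr / n) ^ n` bound the
volume of that ball by the `L^n` norm of `tr D²w` on the contact set, and ellipticity bounds `tr
D²w` by `f⁺`, by `|b| t / r`, and by a multiple of `t / r ^ 2` supported where `|x - z| < r` and
`u ≤ φ ≤ M t`. As `q > n`, Hölder makes the drift term negligible on small balls, and `f⁺` is
negligible once `t` dominates its norm; hence `{u ≤ M t}` fills a fixed portion of the ball of
radius `r`.

Applied to balls almost maximal inside `{u > M ^ m t₀}`, this says that each such superlevel set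
loses a fixed portion of its measure when `m` increases by one: its measure decays geometrically,
so that `u ^ ε` is summable over the layers for small `ε`.
-/

open Metric Set Filter
open scoped NNReal Topology

section Matrix

variable {ι : Type*} {lam Lam : ℝ} {A H : Matrix ι ι ℝ}

open scoped MatrixOrder in
theorem trace_mul_nonneg_of_posSemidef [Fintype ι] (hA : A.PosSemidef) (hH : H.PosSemidef) :
    0 ≤ (A * H).trace := by
  classical
  obtain ⟨C, rfl⟩ := CStarAlgebra.nonneg_iff_eq_star_mul_self.mp hH.nonneg
  rw [Matrix.star_eq_conjTranspose, ← Matrix.mul_assoc, Matrix.trace_mul_comm, ← Matrix.mul_assoc]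
  exact (hA.mul_mul_conjTranspose_same C).trace_nonneg

theorem det_le_trace_div_card_pow [Fintype ι] [DecidableEq ι] [Nonempty ι] (hH : H.PosSemidef) :
    H.det ≤ (H.trace / Fintype.card ι) ^ Fintype.card ι := by
  have hnonneg := hH.eigenvalues_nonneg
  have hcard : (Fintype.card ι : ℝ) ≠ 0 := by positivity
  have amgm := Real.geom_mean_le_arith_mean_weighted Finset.univ
    (fun _ => (Fintype.card ι : ℝ)⁻¹) hH.1.eigenvalues (fun _ _ => by positivity)
    (by simp [hcard]) fun i _ => hnonneg i
  rw [Real.finsetProd_rpow _ _ fun i _ => hnonneg i, ← Finset.mul_sum, ← div_eq_inv_mul] at amgm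
  have hdet : H.det = ∏ i, hH.1.eigenvalues i := by simp [hH.1.det_eq_prod_eigenvalues]
  have htrace : H.trace = ∑ i, hH.1.eigenvalues i := by simp [hH.1.trace_eq_sum_eigenvalues]
  rw [hdet, htrace]
  simpa [Real.rpow_inv_natCast_pow (Finset.prod_nonneg fun i _ => hnonneg i)
    Fintype.card_ne_zero] using pow_le_pow_left₀
      (Real.rpow_nonneg (Finset.prod_nonneg fun i _ => hnonneg i) _) amgm (Fintype.card ι)

variable [DecidableEq ι]

/-- The coefficient matrices `lam I ≤ A ≤ Lam I` admissible in the Pucci operators. Symmetry of `A`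
follows from that of the two differences. -/
structure IsElliptic (lam Lam : ℝ) (A : Matrix ι ι ℝ) : Prop where
  sub_posSemidef : (A - lam • (1 : Matrix ι ι ℝ)).PosSemidef
  posSemidef_sub : (Lam • (1 : Matrix ι ι ℝ) - A).PosSemidef

namespace IsElliptic

theorem smul_one (h : lam ≤ Lam) : IsElliptic lam Lam (lam • (1 : Matrix ι ι ℝ)) where
  sub_posSemidef := by simpa using Matrix.PosSemidef.zero
  posSemidef_sub := by
    rw [← sub_smul]
    exact Matrix.PosSemidef.one.smul (sub_nonneg.2 h)

variable [Fintype ι]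

theorem trace_le (hA : IsElliptic lam Lam A) : A.trace ≤ Fintype.card ι * Lam := by
  have := hA.posSemidef_sub.trace_nonneg
  rw [Matrix.trace_sub, Matrix.trace_smul, Matrix.trace_one, smul_eq_mul] at this
  linarith

theorem mul_trace_le_trace_mul (hA : IsElliptic lam Lam A) (hH : H.PosSemidef) :
    lam * H.trace ≤ (A * H).trace := by
  simpa [Matrix.sub_mul] using trace_mul_nonneg_of_posSemidef hA.sub_posSemidef hH

theorem mul_dotProduct_self_le (hA : IsElliptic lam Lam A) (v : ι → ℝ) :
    lam * (v ⬝ᵥ v) ≤ v ⬝ᵥ A.mulVec v := by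
  simpa [Matrix.sub_mulVec, Matrix.smul_mulVec] using
    hA.sub_posSemidef.dotProduct_mulVec_nonneg v

end IsElliptic

theorem mul_trace_add_le_pucciMinus {n : ℕ} {κ : ℝ} (hLam : lam ≤ Lam)
    {H P : Matrix (Fin n) (Fin n) ℝ} (hH : H.PosSemidef)
    (hP : ∀ A, IsElliptic lam Lam A → κ ≤ (A * P).trace) :
    lam * H.trace + κ ≤ pucciMinus n lam Lam (H + P) := by
  refine le_csInf ⟨_, lam • 1, by simp [Matrix.IsSymm], (IsElliptic.smul_one hLam).1,
    (IsElliptic.smul_one hLam).2, rfl⟩ ?_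
  rintro _ ⟨A, -, hlower, hupper, rfl⟩
  have hA : IsElliptic lam Lam A := ⟨hlower, hupper⟩
  rw [Matrix.mul_add, Matrix.trace_add]
  exact add_le_add (hA.mul_trace_le_trace_mul hH) (hP A hA)

end Matrix

section SecondDerivative

theorem deriv_deriv_nonneg_of_isLocalMin {f : ℝ → ℝ} {a : ℝ} (hf : ContinuousAt f a)
    (hmin : IsLocalMin f a) : 0 ≤ deriv (deriv f) a := by
  by_contra! hneg
  have hmax : IsLocalMax f a := isLocalMax_of_deriv_deriv_neg hneg hmin.deriv_eq_zero hf
  have hconst : f =ᶠ[𝓝 a] fun _ => f a := by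
    filter_upwards [hmin, hmax] with s h₁ h₂ using le_antisymm h₂ h₁
  exact hneg.ne (by simpa using hconst.deriv.deriv_eq)

variable {E : Type*} [NormedAddCommGroup E] [NormedSpace ℝ E] {g : E → ℝ} {x : E}

theorem differentiableAt_fderiv_of_contDiffAt {F : Type*} [NormedAddCommGroup F]
    [NormedSpace ℝ F] {h : E → F} (hh : ContDiffAt ℝ 2 h x) :
    DifferentiableAt ℝ (fderiv ℝ h) x :=
  (hh.fderiv_right (m := 1) le_rfl).differentiableAt one_ne_zero

theorem deriv_deriv_comp_add_smul (hg : ContDiffAt ℝ 2 g x) (v : E) :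
    deriv (deriv fun s : ℝ => g (x + s • v)) 0 = fderiv ℝ (fderiv ℝ g) x v v := by
  have hline (s : ℝ) : HasDerivAt (fun s : ℝ => x + s • v) v s := by
    simpa using ((hasDerivAt_id s).smul_const v).const_add x
  have htendsto : Tendsto (fun s : ℝ => x + s • v) (𝓝 0) (𝓝 x) := by
    simpa using (hline 0).continuousAt.tendsto
  have hderiv : deriv (fun s : ℝ => g (x + s • v)) =ᶠ[𝓝 0]
      fun s => fderiv ℝ g (x + s • v) v := by
    filter_upwards [htendsto.eventually (hg.eventually (by simp))] with s hs
    exact ((hs.differentiableAt (by simp)).hasFDerivAt.comp_hasDerivAt s (hline s)).deriv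
  have hfderiv : HasFDerivAt (fderiv ℝ g) (fderiv ℝ (fderiv ℝ g) x) (x + (0 : ℝ) • v) := by
    simpa using (differentiableAt_fderiv_of_contDiffAt hg).hasFDerivAt
  have hderiv₂ := hfderiv.comp_hasDerivAt (0 : ℝ) (hline 0)
  rw [hderiv.deriv_eq]
  exact (hderiv₂.clm_apply (hasDerivAt_const (0 : ℝ) v)).deriv.trans (by simp)

theorem fderiv_fderiv_nonneg_of_isLocalMin (hg : ContDiffAt ℝ 2 g x) (hmin : IsLocalMin g x)
    (v : E) : 0 ≤ fderiv ℝ (fderiv ℝ g) x v v := by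
  have hline : ContinuousAt (fun s : ℝ => x + s • v) 0 := by fun_prop
  rw [← deriv_deriv_comp_add_smul hg]
  refine deriv_deriv_nonneg_of_isLocalMin ?_ ?_
  · exact ContinuousAt.comp (g := g) (by simpa using hg.continuousAt) hline
  · have hmin' : IsLocalMin g (x + (0 : ℝ) • v) := by simpa using hmin
    exact hmin'.comp_continuous (f := g) (g := fun s : ℝ => x + s • v) (b := (0 : ℝ)) hline

end SecondDerivative

section Hessian

variable {n : ℕ} {w φ : EuclideanSpace ℝ (Fin n) → ℝ} {x : EuclideanSpace ℝ (Fin n)}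

theorem hess_apply (hw : ContDiffAt ℝ 2 w x) (i j : Fin n) :
    hess n w x i j = fderiv ℝ (fderiv ℝ w) x (EuclideanSpace.single i 1)
      (EuclideanSpace.single j 1) := by
  have h := (differentiableAt_fderiv_of_contDiffAt hw).hasFDerivAt.clm_apply
    (hasFDerivAt_const (EuclideanSpace.single j (1 : ℝ)) x)
  simp [hess, h.fderiv]

theorem hess_sub_add (hw : ContDiffAt ℝ 2 w x) (hφ : ContDiffAt ℝ 2 φ x) :
    hess n (fun y => w y - φ y) x + hess n φ x = hess n w x := by
  have hsub : fderiv ℝ (fun y => w y - φ y) =ᶠ[𝓝 x] fun y => fderiv ℝ w y - fderiv ℝ φ y := by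
    filter_upwards [hw.eventually (by simp), hφ.eventually (by simp)] with y hwy hφy
    exact fderiv_fun_sub (hwy.differentiableAt (by simp)) (hφy.differentiableAt (by simp))
  ext i j
  rw [Matrix.add_apply, hess_apply hw, hess_apply hφ, hess_apply (hw.sub hφ), hsub.fderiv_eq,
    fderiv_fun_sub (differentiableAt_fderiv_of_contDiffAt hw)
      (differentiableAt_fderiv_of_contDiffAt hφ)]
  simp

theorem hess_const_mul_sub_const (hw : ContDiff ℝ 2 w) (a c : ℝ) :
    hess n (fun y => a * (w y - c)) x = a • hess n w x := by
  have hfderiv : fderiv ℝ (fun y => a * (w y - c)) = fun y => a • fderiv ℝ w y := funext fun y =>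
    (((hw.differentiable (by simp) y).hasFDerivAt.sub_const c).const_mul a).fderiv
  ext i j
  rw [hess_apply (by fun_prop), hfderiv,
    fderiv_fun_const_smul (differentiableAt_fderiv_of_contDiffAt hw.contDiffAt)]
  simp [hess_apply hw.contDiffAt]

theorem dotProduct_hess_mulVec (hw : ContDiffAt ℝ 2 w x) (v : EuclideanSpace ℝ (Fin n)) :
    v.ofLp ⬝ᵥ (hess n w x).mulVec v.ofLp = fderiv ℝ (fderiv ℝ w) x v v := by
  have hv : v = ∑ i, v i • EuclideanSpace.single i (1 : ℝ) := by
    ext j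
    simp [Pi.single_apply]
  conv_rhs => rw [hv]
  simp only [dotProduct, Matrix.mulVec, hess_apply hw, Finset.mul_sum, map_sum, map_smul,
    _root_.sum_apply, _root_.smul_apply, smul_eq_mul]
  rw [Finset.sum_comm]
  exact Finset.sum_congr rfl fun i _ => Finset.sum_congr rfl fun j _ => by ring

theorem hess_posSemidef (hw : ContDiffAt ℝ 2 w x)
    (hpos : ∀ v, 0 ≤ fderiv ℝ (fderiv ℝ w) x v v) : (hess n w x).PosSemidef := by
  refine .of_dotProduct_mulVec_nonneg ?_ fun v => ?_
  · ext i j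
    simpa [hess_apply hw] using (hw.isSymmSndFDerivAt (by simp)).eq _ _
  · simpa using (dotProduct_hess_mulVec hw (.toLp 2 v)).ge.trans' (hpos _)

theorem exists_hasFDerivAt_gradient_det_eq (hw : ContDiffAt ℝ 2 w x) :
    ∃ L, HasFDerivAt (gradient w) L x ∧ L.det = (hess n w x).det := by
  let dual := (InnerProductSpace.toDual ℝ (EuclideanSpace ℝ (Fin n))).symm.toContinuousLinearEquiv
  refine ⟨_, dual.toContinuousLinearMap.hasFDerivAt.comp x
    (differentiableAt_fderiv_of_contDiffAt hw).hasFDerivAt, ?_⟩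
  let e := EuclideanSpace.basisFun (Fin n) ℝ
  rw [ContinuousLinearMap.det, ← LinearMap.det_toMatrix e.toBasis, ← Matrix.det_transpose]
  congr 1
  ext i j
  rw [Matrix.transpose_apply, LinearMap.toMatrix_apply, e.coe_toBasis, e.coe_toBasis_repr_apply,
    e.repr_apply_apply, real_inner_comm, hess_apply hw]
  simp only [e, EuclideanSpace.basisFun_apply]
  exact InnerProductSpace.toDual_symm_apply

end Hessian

section ContactSet

/-- The points of `K` at which `w ≤ 0`, the gradient of `w` has norm at most `ρ`, and the second
derivative of `w` is nonnegative. It contains the points where a nonpositive `w` is touched from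
below by an affine function of slope at most `ρ`. -/
def contactSet {E : Type*} [NormedAddCommGroup E] [NormedSpace ℝ E] (w : E → ℝ) (K : Set E)
    (ρ : ℝ) : Set E :=
  {x ∈ K | w x ≤ 0 ∧ ‖fderiv ℝ w x‖ ≤ ρ ∧ ∀ v, 0 ≤ fderiv ℝ (fderiv ℝ w) x v v}

theorem isClosed_contactSet {E : Type*} [NormedAddCommGroup E] [NormedSpace ℝ E] {w : E → ℝ}
    {K : Set E} (hK : IsClosed K) (hw : ∀ x ∈ K, ContDiffAt ℝ 2 w x) (ρ : ℝ) :
    IsClosed (contactSet w K ρ) := by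
  have hw₀ : ContinuousOn w K := fun x hx => (hw x hx).continuousAt.continuousWithinAt
  have hw₁ : ContinuousOn (fderiv ℝ w) K := fun x hx =>
    (differentiableAt_fderiv_of_contDiffAt (hw x hx)).continuousAt.continuousWithinAt
  have hw₂ : ContinuousOn (fderiv ℝ (fderiv ℝ w)) K := fun x hx =>
    (((hw x hx).fderiv_right (m := 1) le_rfl).fderiv_right (m := 0)
      le_rfl).continuousAt.continuousWithinAt
  have heq : contactSet w K ρ = (K ∩ w ⁻¹' Iic 0) ∩ ((K ∩ (‖fderiv ℝ w ·‖) ⁻¹' Iic ρ) ∩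
      ⋂ v, K ∩ (fderiv ℝ (fderiv ℝ w) · v v) ⁻¹' Ici 0) := by
    ext x
    simp only [contactSet, mem_ofPred_eq, mem_inter_iff, mem_preimage, mem_Iic, mem_Ici, mem_iInter]
    exact ⟨fun ⟨h, h₀, h₁, h₂⟩ => ⟨⟨h, h₀⟩, ⟨h, h₁⟩, fun v => ⟨h, h₂ v⟩⟩,
      fun ⟨⟨h, h₀⟩, ⟨_, h₁⟩, h₂⟩ => ⟨h, h₀, h₁, fun v => (h₂ v).2⟩⟩
  rw [heq]
  refine (hw₀.preimage_isClosed_of_isClosed hK isClosed_Iic).inter <|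
    (hw₁.norm.preimage_isClosed_of_isClosed hK isClosed_Iic).inter <| isClosed_iInter fun v => ?_
  exact ((hw₂.clm_apply continuousOn_const).clm_apply
    continuousOn_const).preimage_isClosed_of_isClosed hK isClosed_Ici

variable {E : Type*} [NormedAddCommGroup E] [InnerProductSpace ℝ E] [CompleteSpace E]
  {w : E → ℝ} {K : Set E} {ρ : ℝ}

theorem gradient_eq_and_fderiv_fderiv_nonneg_of_isLocalMin_sub_inner {x p : E}
    (hw : ContDiffAt ℝ 2 w x) (hmin : IsLocalMin (fun y => w y - inner ℝ p y) x) :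
    gradient w x = p ∧ ∀ v, 0 ≤ fderiv ℝ (fderiv ℝ w) x v v := by
  have hfderiv : fderiv ℝ (fun y => w y - inner ℝ p y) =ᶠ[𝓝 x]
      fun y => fderiv ℝ w y - innerSL ℝ p := by
    filter_upwards [hw.eventually (by simp)] with y hy
    exact ((hy.differentiableAt (by simp)).hasFDerivAt.sub (innerSL ℝ p).hasFDerivAt).fderiv
  constructor
  · have hzero : fderiv ℝ w x = innerSL ℝ p :=
      sub_eq_zero.1 (hfderiv.eq_of_nhds.symm.trans hmin.fderiv_eq_zero)
    rw [gradient, hzero]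
    exact (InnerProductSpace.toDual ℝ E).symm_apply_apply p
  · intro v
    have hsmooth : ContDiffAt ℝ 2 (fun y => w y - inner ℝ p y) x :=
      hw.sub (innerSL ℝ p).contDiff.contDiffAt
    simpa [hfderiv.fderiv_eq, fderiv_sub_const] using
      fderiv_fderiv_nonneg_of_isLocalMin hsmooth hmin v

theorem ball_subset_gradient_image_contactSet (hK : IsCompact K)
    (hw : ∀ x ∈ K, ContDiffAt ℝ 2 w x) (hfrontier : ∀ x ∈ frontier K, 0 ≤ w x) {x₀ : E}
    (hx₀ : x₀ ∈ K) (hρ : ρ * diam K < -w x₀) :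
    ball 0 ρ ⊆ gradient w '' contactSet w K ρ := by
  intro p hp
  have hpρ : ‖p‖ ≤ ρ := (mem_ball_zero_iff.1 hp).le
  have hcont : ContinuousOn (fun y => w y - inner ℝ p y) K := fun y hy =>
    ((hw y hy).continuousAt.sub (by fun_prop)).continuousWithinAt
  obtain ⟨x, hx, hmin⟩ := hK.exists_isMinOn ⟨x₀, hx₀⟩ hcont
  have hneg : w x < 0 := by
    have hle : w x - inner ℝ p x ≤ w x₀ - inner ℝ p x₀ := hmin hx₀
    have hinner : inner ℝ p x - inner ℝ p x₀ ≤ ρ * diam K := by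
      rw [← inner_sub_right]
      refine (real_inner_le_norm _ _).trans (mul_le_mul hpρ ?_ (norm_nonneg _) ?_)
      · exact dist_eq_norm x x₀ ▸ dist_le_diam_of_mem hK.isBounded hx hx₀
      · exact (norm_nonneg p).trans hpρ
    linarith
  have hinterior : x ∈ interior K := by
    by_contra h
    exact hneg.not_ge (hfrontier x ⟨subset_closure hx, h⟩)
  obtain ⟨hgrad, hhess⟩ := gradient_eq_and_fderiv_fderiv_nonneg_of_isLocalMin_sub_inner (hw x hx)
    (hmin.isLocalMin (mem_interior_iff_mem_nhds.1 hinterior))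
  have hnorm : ‖fderiv ℝ w x‖ = ‖p‖ := by
    rw [← hgrad, gradient, LinearIsometryEquiv.norm_map]
  exact ⟨x, ⟨hx, hneg.le, hnorm.trans_le hpρ, hhess⟩, hgrad⟩

end ContactSet

section AlexandrovBakelmanPucci

variable {n : ℕ} {w : EuclideanSpace ℝ (Fin n) → ℝ} {K : Set (EuclideanSpace ℝ (Fin n))} {ρ : ℝ}

theorem hess_posSemidef_of_mem_contactSet (hw : ∀ x ∈ K, ContDiffAt ℝ 2 w x)
    {x : EuclideanSpace ℝ (Fin n)} (hx : x ∈ contactSet w K ρ) : (hess n w x).PosSemidef :=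
  hess_posSemidef (hw x hx.1) hx.2.2.2

theorem volume_ball_le_lintegral_contactSet [NeZero n] (hK : IsCompact K)
    (hw : ∀ x ∈ K, ContDiffAt ℝ 2 w x) (hfrontier : ∀ x ∈ frontier K, 0 ≤ w x)
    {x₀ : EuclideanSpace ℝ (Fin n)} (hx₀ : x₀ ∈ K) (hρ : ρ * diam K < -w x₀) :
    volume (ball (0 : EuclideanSpace ℝ (Fin n)) ρ) ≤
      ∫⁻ x in contactSet w K ρ, ENNReal.ofReal ((hess n w x).trace / n) ^ n := by
  have hmeas := (isClosed_contactSet hK.isClosed hw ρ).measurableSet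
  choose! L hL hdet using fun x hx => exists_hasFDerivAt_gradient_det_eq (hw x hx)
  calc volume (ball (0 : EuclideanSpace ℝ (Fin n)) ρ)
      ≤ volume (gradient w '' contactSet w K ρ) :=
        measure_mono (ball_subset_gradient_image_contactSet hK hw hfrontier hx₀ hρ)
    _ ≤ ∫⁻ x in contactSet w K ρ, ENNReal.ofReal |(L x).det| :=
        addHaar_image_le_lintegral_abs_det_fderiv volume hmeas fun x hx =>
          (hL x hx.1).hasFDerivWithinAt
    _ ≤ ∫⁻ x in contactSet w K ρ, ENNReal.ofReal ((hess n w x).trace / n) ^ n := by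
        refine setLIntegral_mono' hmeas fun x hx => ?_
        have hpsd := hess_posSemidef_of_mem_contactSet hw hx
        have htrace : 0 ≤ (hess n w x).trace / n := div_nonneg hpsd.trace_nonneg n.cast_nonneg
        rw [hdet x hx.1, abs_of_nonneg hpsd.det_nonneg, ← ENNReal.ofReal_pow htrace]
        exact ENNReal.ofReal_le_ofReal (by simpa using det_le_trace_div_card_pow hpsd)

end AlexandrovBakelmanPucci

section GaussianBump

/-- The unnormalized Gaussian `x ↦ exp (-κ |x - z|²)`, from which the barriers are built. -/
noncomputable def gaussianBump {E : Type*} [NormedAddCommGroup E] (z : E) (κ : ℝ) (x : E) : ℝ :=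
  Real.exp (-κ * ‖x - z‖ ^ 2)

theorem gaussianBump_pos {E : Type*} [NormedAddCommGroup E] (z : E) (κ : ℝ) (x : E) :
    0 < gaussianBump z κ x :=
  Real.exp_pos _

theorem gaussianBump_le_one {E : Type*} [NormedAddCommGroup E] (z : E) {κ : ℝ} (hκ : 0 ≤ κ)
    (x : E) : gaussianBump z κ x ≤ 1 :=
  Real.exp_le_one_iff.2 (by nlinarith [sq_nonneg ‖x - z‖])

theorem exp_le_gaussianBump {E : Type*} [NormedAddCommGroup E] {z x : E} {κ R : ℝ} (hκ : 0 ≤ κ)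
    (hx : x ∈ closedBall z R) : Real.exp (-κ * R ^ 2) ≤ gaussianBump z κ x := by
  have hsq : ‖x - z‖ ^ 2 ≤ R ^ 2 := by
    gcongr
    exact mem_closedBall_iff_norm.1 hx
  exact Real.exp_le_exp.2 (by nlinarith)

variable {E : Type*} [NormedAddCommGroup E] [InnerProductSpace ℝ E] (z : E) (κ : ℝ)

theorem contDiff_gaussianBump {k : ℕ∞} : ContDiff ℝ k (gaussianBump z κ) :=
  (contDiff_const.mul ((contDiff_id.sub contDiff_const).norm_sq ℝ)).exp

theorem hasFDerivAt_gaussianBump (x : E) :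
    HasFDerivAt (gaussianBump z κ) ((-2 * κ * gaussianBump z κ x) • innerSL ℝ (x - z)) x := by
  refine (((hasFDerivAt_id x).sub_const z).norm_sq.const_mul (-κ)).exp.congr_fderiv ?_
  ext v
  simp [gaussianBump]
  ring

theorem norm_fderiv_gaussianBump_le {κ : ℝ} (hκ : 0 ≤ κ) (x : E) :
    ‖fderiv ℝ (gaussianBump z κ) x‖ ≤ 2 * κ * ‖x - z‖ := by
  rw [(hasFDerivAt_gaussianBump z κ x).fderiv, norm_smul, innerSL_apply_norm, Real.norm_eq_abs,
    abs_mul, abs_of_pos (gaussianBump_pos z κ x), abs_mul, abs_of_nonneg hκ, abs_neg, abs_two]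
  refine mul_le_mul_of_nonneg_right ?_ (norm_nonneg _)
  exact mul_le_of_le_one_right (by positivity) (gaussianBump_le_one z hκ x)

theorem fderiv_fderiv_gaussianBump (x v v' : E) :
    fderiv ℝ (fderiv ℝ (gaussianBump z κ)) x v v' = gaussianBump z κ x *
      (4 * κ ^ 2 * (inner ℝ (x - z) v * inner ℝ (x - z) v') - 2 * κ * inner ℝ v v') := by
  have hfderiv : fderiv ℝ (gaussianBump z κ) =
      fun y => (-2 * κ * gaussianBump z κ y) • innerSL ℝ (y - z) :=
    funext fun y => (hasFDerivAt_gaussianBump z κ y).fderiv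
  have hinner : HasFDerivAt (fun y => innerSL ℝ (y - z)) (innerSL ℝ) x :=
    (innerSL ℝ).hasFDerivAt.comp x ((hasFDerivAt_id x).sub_const z)
  rw [hfderiv, (((hasFDerivAt_gaussianBump z κ x).const_mul (-2 * κ)).fun_smul hinner).fderiv]
  have happly : (innerSL ℝ : E →L[ℝ] E →L[ℝ] ℝ) v v' = inner ℝ v v' := rfl
  simp only [happly, innerSL_apply_apply, _root_.add_apply, _root_.smul_apply, smul_eq_mul,
    ContinuousLinearMap.smulRight_apply]
  ring

variable {n : ℕ} {lam Lam : ℝ}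

theorem hess_gaussianBump (z : EuclideanSpace ℝ (Fin n)) (κ : ℝ) (x : EuclideanSpace ℝ (Fin n)) :
    hess n (gaussianBump z κ) x = gaussianBump z κ x •
      ((4 * κ ^ 2) • Matrix.vecMulVec (x - z).ofLp (x - z).ofLp - (2 * κ) • 1) := by
  ext i j
  rw [hess_apply (contDiff_gaussianBump z κ).contDiffAt, fderiv_fderiv_gaussianBump]
  simp [EuclideanSpace.inner_single_right, Matrix.vecMulVec_apply, Matrix.one_apply,
    eq_comm]

theorem IsElliptic.le_trace_mul_hess_gaussianBump {A : Matrix (Fin n) (Fin n) ℝ}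
    (hA : IsElliptic lam Lam A) {κ : ℝ} (hκ : 0 ≤ κ) (z x : EuclideanSpace ℝ (Fin n)) :
    2 * κ * (2 * κ * lam * ‖x - z‖ ^ 2 - n * Lam) * gaussianBump z κ x ≤
      (A * hess n (gaussianBump z κ) x).trace := by
  have htrace : (A * hess n (gaussianBump z κ) x).trace = gaussianBump z κ x *
      (4 * κ ^ 2 * ((x - z).ofLp ⬝ᵥ A.mulVec (x - z).ofLp) - 2 * κ * A.trace) := by
    simp [hess_gaussianBump, Matrix.mul_sub, Matrix.mul_vecMulVec, dotProduct_comm]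
  have hquad := hA.mul_dotProduct_self_le (x - z).ofLp
  have hnorm : (x - z).ofLp ⬝ᵥ (x - z).ofLp = ‖x - z‖ ^ 2 := by
    rw [EuclideanSpace.real_norm_sq_eq]
    simp [dotProduct, sq]
  have hAtrace := hA.trace_le
  rw [hnorm] at hquad
  rw [Fintype.card_fin] at hAtrace
  rw [htrace, mul_comm]
  refine mul_le_mul_of_nonneg_left ?_ (gaussianBump_pos z κ x).le
  nlinarith [mul_le_mul_of_nonneg_left hquad (sq_nonneg κ),
    mul_le_mul_of_nonneg_left hAtrace hκ]

theorem IsElliptic.neg_indicator_le_trace_mul_hess_gaussianBump {A : Matrix (Fin n) (Fin n) ℝ}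
    (hA : IsElliptic lam Lam A) {κ r : ℝ} (hκ : 0 ≤ κ) (hlam : 0 ≤ lam) (hLam : 0 ≤ Lam)
    (hr : 0 ≤ r) (hκr : n * Lam ≤ 2 * κ * lam * r ^ 2) (z x : EuclideanSpace ℝ (Fin n)) :
    -(ball z r).indicator (fun _ => 2 * κ * (n * Lam)) x ≤
      (A * hess n (gaussianBump z κ) x).trace := by
  refine le_trans ?_ (hA.le_trace_mul_hess_gaussianBump hκ z x)
  have hpos := gaussianBump_pos z κ x
  by_cases hx : x ∈ ball z r
  · have : 0 ≤ 2 * κ * (2 * κ * lam * ‖x - z‖ ^ 2) * gaussianBump z κ x := by positivity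
    have : 2 * κ * (n * Lam) * gaussianBump z κ x ≤ 2 * κ * (n * Lam) :=
      mul_le_of_le_one_right (by positivity) (gaussianBump_le_one z hκ x)
    rw [indicator_of_mem hx]
    linarith
  · have hxr : r ≤ ‖x - z‖ := by simpa [dist_eq_norm] using hx
    have : n * Lam ≤ 2 * κ * lam * ‖x - z‖ ^ 2 := hκr.trans (by gcongr)
    rw [indicator_of_notMem hx, neg_zero]
    exact mul_nonneg (mul_nonneg (by positivity) (sub_nonneg.2 this)) hpos.le

end GaussianBump

section Barrier

/-- A comparison function for the annulus between the balls of radii `r` and `3r` about `z`: at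
level `t` it is at least `3t` on the ball of radius `2r`, vanishes on the sphere of radius `3r`, and
is a subsolution of every elliptic operator outside the ball of radius `r`. -/
structure IsBarrier {n : ℕ} (lam Lam M B : ℝ) (z : EuclideanSpace ℝ (Fin n)) (r t : ℝ)
    (φ : EuclideanSpace ℝ (Fin n) → ℝ) : Prop where
  contDiff : ContDiff ℝ 2 φ
  le_mul : ∀ x, φ x ≤ M * t
  three_mul_le : ∀ x ∈ closedBall z (2 * r), 3 * t ≤ φ x
  eq_zero : ∀ x ∈ sphere z (3 * r), φ x = 0
  norm_fderiv_le : ∀ x ∈ closedBall z (3 * r), ‖fderiv ℝ φ x‖ ≤ B * (t / r)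
  le_trace_mul_hess : ∀ x A, IsElliptic lam Lam A →
    -(ball z r).indicator (fun _ => B * (t / r ^ 2)) x ≤ (A * hess n φ x).trace

variable {n : ℕ} {lam Lam : ℝ}

theorem IsElliptic.neg_indicator_le_trace_mul_hess_const_mul_gaussianBump_sub
    {A : Matrix (Fin n) (Fin n) ℝ} (hA : IsElliptic lam Lam A) {a κ r D : ℝ} (ha : 0 ≤ a)
    (hκ : 0 ≤ κ) (hlam : 0 ≤ lam) (hLam : 0 ≤ Lam) (hr : 0 ≤ r)
    (hκr : n * Lam ≤ 2 * κ * lam * r ^ 2) (hD : a * (2 * κ * (n * Lam)) ≤ D) (c : ℝ)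
    (z x : EuclideanSpace ℝ (Fin n)) :
    -(ball z r).indicator (fun _ => D) x ≤
      (A * hess n (fun y => a * (gaussianBump z κ y - c)) x).trace := by
  rw [hess_const_mul_sub_const (contDiff_gaussianBump z κ), Matrix.mul_smul, Matrix.trace_smul,
    smul_eq_mul]
  have htrace := mul_le_mul_of_nonneg_left
    (hA.neg_indicator_le_trace_mul_hess_gaussianBump hκ hlam hLam hr hκr z x) ha
  by_cases hx : x ∈ ball z r
  · rw [indicator_of_mem hx] at htrace ⊢
    linarith
  · rw [indicator_of_notMem hx] at htrace ⊢
    linarith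

theorem isBarrier_gaussianBump {γ M B r t : ℝ} (hlam : 0 < lam) (hLam : 0 ≤ Lam)
    (hγ : n * Lam ≤ 2 * γ * lam) (hM : M * (Real.exp (-4 * γ) - Real.exp (-9 * γ)) = 3)
    (hM₀ : 0 ≤ M) (hB₁ : 6 * M * γ ≤ B) (hB₂ : 2 * M * γ * (n * Lam) ≤ B) (hr : 0 < r) (ht : 0 ≤ t)
    (z : EuclideanSpace ℝ (Fin n)) : IsBarrier lam Lam M B z r t
      fun x => M * t * (gaussianBump z (γ / r ^ 2) x - Real.exp (-9 * γ)) := by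
  have hnLam : 0 ≤ n * Lam := by positivity
  have hγ₀ : 0 ≤ γ := by nlinarith
  have hκ : 0 ≤ γ / r ^ 2 := by positivity
  have hsmooth := contDiff_gaussianBump z (γ / r ^ 2) (k := 2)
  refine ⟨by fun_prop, fun x => ?le, fun x hx => ?ge, fun x hx => ?zero, fun x hx => ?grad,
    fun x A hA => ?hess⟩
  case le =>
    have := gaussianBump_le_one z hκ x
    exact mul_le_of_le_one_right (by positivity) (by linarith [Real.exp_pos (-9 * γ)])
  case ge =>
    have hexp := exp_le_gaussianBump hκ hx
    rw [show -(γ / r ^ 2) * (2 * r) ^ 2 = -4 * γ by field_simp; ring] at hexp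
    rw [← hM, mul_right_comm]
    gcongr
  case zero =>
    rw [gaussianBump, mem_sphere_iff_norm.1 hx,
      show -(γ / r ^ 2) * (3 * r) ^ 2 = -9 * γ by field_simp; ring, sub_self, mul_zero]
  case grad =>
    have hxz : ‖x - z‖ ≤ 3 * r := mem_closedBall_iff_norm.1 hx
    have hdiff := hsmooth.differentiable (by simp) x
    rw [fderiv_const_mul (hdiff.sub_const _), fderiv_sub_const, norm_smul]
    calc ‖M * t‖ * ‖fderiv ℝ (gaussianBump z (γ / r ^ 2)) x‖
        ≤ M * t * (2 * (γ / r ^ 2) * (3 * r)) := by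
          rw [Real.norm_of_nonneg (by positivity)]
          gcongr
          exact (norm_fderiv_gaussianBump_le z hκ x).trans (by gcongr)
      _ = 6 * M * γ * (t / r) := by field_simp; ring
      _ ≤ _ := by gcongr
  case hess =>
    refine hA.neg_indicator_le_trace_mul_hess_const_mul_gaussianBump_sub (by positivity) hκ hlam.le
      hLam hr.le (hγ.trans_eq (by field_simp)) ?_ _ z x
    calc M * t * (2 * (γ / r ^ 2) * (n * Lam)) = 2 * M * γ * (n * Lam) * (t / r ^ 2) := by ring
      _ ≤ _ := by gcongr

theorem exists_isBarrier (n : ℕ) (hlam : 0 < lam) (hLam : 0 ≤ Lam) :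
    ∃ M B, 1 < M ∧ 0 ≤ B ∧ ∀ (z : EuclideanSpace ℝ (Fin n)) (r t : ℝ), 0 < r → 0 ≤ t →
      ∃ φ, IsBarrier lam Lam M B z r t φ := by
  let γ := n * Lam / (2 * lam) + 1
  have hγ₀ : 0 < γ := by positivity
  have hγ : n * Lam ≤ 2 * γ * lam := by
    have : 2 * γ * lam = n * Lam + 2 * lam := by simp only [γ]; field_simp
    linarith
  have hgap : 0 < Real.exp (-4 * γ) - Real.exp (-9 * γ) :=
    sub_pos.2 (Real.exp_lt_exp.2 (by linarith))
  have hgap_lt : Real.exp (-4 * γ) - Real.exp (-9 * γ) < 3 := by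
    linarith [Real.exp_le_one_iff.2 (by linarith : -4 * γ ≤ 0), Real.exp_pos (-9 * γ)]
  have hM := div_mul_cancel₀ 3 hgap.ne'
  exact ⟨_, _, (one_lt_div hgap).2 hgap_lt, le_max_of_le_left (by positivity), fun z r t hr ht =>
    ⟨_, isBarrier_gaussianBump hlam hLam hγ hM (by positivity) (le_max_left _ _) (le_max_right _ _)
      hr ht z⟩⟩

end Barrier

section Supersolution

variable {n : ℕ} {lam Lam : ℝ}

/-- Nonnegative classical supersolutions `𝓜⁻(D²u) - b|Du| ≤ f` on `Ω`. -/
structure IsPucciSupersolution (lam Lam : ℝ) (b f u : EuclideanSpace ℝ (Fin n) → ℝ)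
    (Ω : Set (EuclideanSpace ℝ (Fin n))) : Prop where
  contDiffAt : ∀ x ∈ Ω, ContDiffAt ℝ 2 u x
  nonneg : ∀ x ∈ Ω, 0 ≤ u x
  pucciMinus_le : ∀ x ∈ Ω, pucciMinus n lam Lam (hess n u x) - b x * gradNorm n u x ≤ f x

theorem IsPucciSupersolution.mono {b f u : EuclideanSpace ℝ (Fin n) → ℝ}
    {Ω Ω' : Set (EuclideanSpace ℝ (Fin n))} (hu : IsPucciSupersolution lam Lam b f u Ω)
    (h : Ω' ⊆ Ω) : IsPucciSupersolution lam Lam b f u Ω' :=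
  ⟨fun x hx => hu.1 x (h hx), fun x hx => hu.2 x (h hx), fun x hx => hu.3 x (h hx)⟩

theorem volume_ball_rpow_inv (z : EuclideanSpace ℝ (Fin n)) {r : ℝ} (hr : 0 < r) [NeZero n] :
    volume (ball z r) ^ (n : ℝ)⁻¹ =
      ENNReal.ofReal r * volume (ball (0 : EuclideanSpace ℝ (Fin n)) 1) ^ (n : ℝ)⁻¹ := by
  rw [Measure.addHaar_ball_of_pos _ _ hr, ENNReal.mul_rpow_of_nonneg _ _ (by positivity),
    finrank_euclideanSpace_fin, ENNReal.ofReal_pow hr.le,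
    ENNReal.pow_rpow_inv_natCast (NeZero.ne n)]

theorem mul_volume_ball_rpow_inv_le_eLpNorm_trace_hess [NeZero n]
    {w : EuclideanSpace ℝ (Fin n) → ℝ} {K : Set (EuclideanSpace ℝ (Fin n))} {ρ : ℝ}
    (hK : IsCompact K) (hw : ∀ x ∈ K, ContDiffAt ℝ 2 w x) (hfrontier : ∀ x ∈ frontier K, 0 ≤ w x)
    {x₀ : EuclideanSpace ℝ (Fin n)} (hx₀ : x₀ ∈ K) (hρ : ρ * diam K < -w x₀) :
    n * volume (ball (0 : EuclideanSpace ℝ (Fin n)) ρ) ^ (n : ℝ)⁻¹ ≤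
      eLpNorm (fun x => (hess n w x).trace) n (volume.restrict (contactSet w K ρ)) := by
  let ν := volume.restrict (contactSet w K ρ)
  have hpow : volume (ball (0 : EuclideanSpace ℝ (Fin n)) ρ) ≤
      eLpNorm ((n : ℝ)⁻¹ • fun x => (hess n w x).trace) (n : ℝ≥0) ν ^ (n : ℝ) := by
    refine (volume_ball_le_lintegral_contactSet hK hw hfrontier hx₀ hρ).trans ?_
    have h := eLpNorm_nnreal_pow_eq_lintegral (μ := ν) (p := (n : ℝ≥0))
      (f := (n : ℝ)⁻¹ • fun x => (hess n w x).trace) (by simp [NeZero.ne n])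
    rw [NNReal.coe_natCast] at h
    rw [h]
    refine lintegral_mono fun x => ?_
    rw [ENNReal.rpow_natCast, Pi.smul_apply, smul_eq_mul, ← div_eq_inv_mul]
    gcongr
    exact Real.ofReal_le_enorm _
  calc n * volume (ball (0 : EuclideanSpace ℝ (Fin n)) ρ) ^ (n : ℝ)⁻¹
      ≤ n * eLpNorm ((n : ℝ)⁻¹ • fun x => (hess n w x).trace) n ν := by
        gcongr
        exact ENNReal.rpow_inv_le_iff (by simp [NeZero.pos n]) |>.2 (by simpa using hpow)
    _ = eLpNorm (fun x => (hess n w x).trace) n ν := by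
        rw [eLpNorm_const_smul, enorm_inv (by simp [NeZero.ne n]), ← mul_assoc]
        simp [ENNReal.mul_inv_cancel, NeZero.ne n]

variable {b f u φ : EuclideanSpace ℝ (Fin n) → ℝ} {z : EuclideanSpace ℝ (Fin n)} {M B r t : ℝ}

theorem IsBarrier.mul_trace_hess_sub_le (hφ : IsBarrier lam Lam M B z r t φ) (hLam : lam ≤ Lam)
    (hu : IsPucciSupersolution lam Lam b f u (closedBall z (3 * r))) {ρ : ℝ} (hρ : ρ ≤ t / r)
    {x : EuclideanSpace ℝ (Fin n)}
    (hx : x ∈ contactSet (fun y => u y - φ y) (closedBall z (3 * r)) ρ) :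
    lam * (hess n (fun y => u y - φ y) x).trace ≤ max (f x) 0 +
      (1 + B) * (t / r) * |b x| + (ball z r).indicator (fun _ => B * (t / r ^ 2)) x := by
  have hux := hu.contDiffAt x hx.1
  have hφx := hφ.contDiff.contDiffAt (x := x)
  have hpucci := mul_trace_add_le_pucciMinus hLam
    (hess_posSemidef (hux.sub hφx) hx.2.2.2) (hφ.le_trace_mul_hess x)
  rw [hess_sub_add hux hφx] at hpucci
  have hgrad : gradNorm n u x ≤ (1 + B) * (t / r) := by
    have hsub := fderiv_fun_sub (hux.differentiableAt (by simp)) (hφx.differentiableAt (by simp))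
    calc ‖fderiv ℝ u x‖ = ‖fderiv ℝ (fun y => u y - φ y) x + fderiv ℝ φ x‖ := by
          rw [hsub, sub_add_cancel]
      _ ≤ t / r + B * (t / r) :=
          norm_add_le_of_le (hx.2.2.1.trans hρ) (hφ.norm_fderiv_le x hx.1)
      _ = (1 + B) * (t / r) := by ring
  have hdrift : b x * gradNorm n u x ≤ (1 + B) * (t / r) * |b x| := by
    rw [mul_comm ((1 + B) * (t / r))]
    exact mul_le_mul (le_abs_self _) hgrad (norm_nonneg _) (abs_nonneg _)
  linarith [hu.pucciMinus_le x hx.1, le_max_left (f x) 0]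

theorem IsBarrier.mul_eLpNorm_trace_hess_sub_le [NeZero n] (hφ : IsBarrier lam Lam M B z r t φ)
    (hlam : 0 ≤ lam) (hLam : lam ≤ Lam)
    (hu : IsPucciSupersolution lam Lam b f u (closedBall z (3 * r)))
    (hb : AEStronglyMeasurable b (volume.restrict (closedBall z (3 * r))))
    (hf : AEStronglyMeasurable f (volume.restrict (closedBall z (3 * r))))
    (hB : 0 ≤ B) (hr : 0 ≤ r) (ht : 0 ≤ t) {ρ : ℝ} (hρ : ρ ≤ t / r) :
    ENNReal.ofReal lam * eLpNorm (fun x => (hess n (fun y => u y - φ y) x).trace) n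
        (volume.restrict (contactSet (fun y => u y - φ y) (closedBall z (3 * r)) ρ)) ≤
      eLpNorm (fun x => max (f x) 0) n (volume.restrict (closedBall z (3 * r))) +
        ENNReal.ofReal ((1 + B) * (t / r)) *
          eLpNorm b n (volume.restrict (closedBall z (3 * r))) +
        ENNReal.ofReal (B * (t / r ^ 2)) *
          volume (ball z r ∩ {x | u x ≤ M * t}) ^ (n : ℝ)⁻¹ := by
  set w := fun y => u y - φ y
  set S := contactSet w (closedBall z (3 * r)) ρ
  have hw : ∀ x ∈ closedBall z (3 * r), ContDiffAt ℝ 2 w x := fun x hx =>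
    (hu.contDiffAt x hx).sub hφ.contDiff.contDiffAt
  have hS : volume.restrict S ≤ volume.restrict (closedBall z (3 * r)) :=
    Measure.restrict_mono_set _ (sep_subset _ _)
  have hpointwise : ∀ᵐ x ∂volume.restrict S, ‖lam * (hess n w x).trace‖ ≤ (max (f x) 0 +
      ((1 + B) * (t / r)) • ‖b x‖) + (ball z r).indicator (fun _ => B * (t / r ^ 2)) x := by
    refine ae_restrict_of_forall_mem
      (isClosed_contactSet isClosed_closedBall hw ρ).measurableSet fun x hx => ?_
    rw [Real.norm_of_nonneg
      (mul_nonneg hlam (hess_posSemidef_of_mem_contactSet hw hx).trace_nonneg)]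
    exact hφ.mul_trace_hess_sub_le hLam hu hρ hx
  have hsublevel : ball z r ∩ S ⊆ ball z r ∩ {x | u x ≤ M * t} := fun x hx =>
    ⟨hx.1, (sub_nonpos.1 hx.2.2.1).trans (hφ.le_mul x)⟩
  have hn : (1 : ℝ≥0∞) ≤ n := by exact_mod_cast NeZero.one_le
  have hf' := (hf.mono_measure hS).sup (aestronglyMeasurable_const (b := (0 : ℝ)))
  have hb' := (hb.mono_measure hS).norm.const_smul ((1 + B) * (t / r))
  calc ENNReal.ofReal lam * eLpNorm (fun x => (hess n w x).trace) n (volume.restrict S)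
      = eLpNorm (fun x => lam * (hess n w x).trace) n (volume.restrict S) := by
        rw [← Real.enorm_of_nonneg hlam, ← eLpNorm_const_smul]
        rfl
    _ ≤ eLpNorm (fun x => max (f x) 0) n (volume.restrict S) +
          eLpNorm (((1 + B) * (t / r)) • fun x => ‖b x‖) n (volume.restrict S) +
          eLpNorm ((ball z r).indicator fun _ => B * (t / r ^ 2)) n (volume.restrict S) := by
        refine (eLpNorm_mono_ae_real hpointwise).trans <| (eLpNorm_add_le (hf'.add hb')
          (aestronglyMeasurable_const.indicator measurableSet_ball) hn).trans ?_
        gcongr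
        exact eLpNorm_add_le hf' hb' hn
    _ ≤ _ := by
        rw [eLpNorm_const_smul, eLpNorm_norm, Real.enorm_of_nonneg (by positivity)]
        gcongr ?_ + _ * ?_ + ?_
        · exact eLpNorm_mono_measure _ hS
        · exact eLpNorm_mono_measure _ hS
        · refine (eLpNorm_indicator_const_le _ _).trans ?_
          rw [Real.enorm_of_nonneg (by positivity), Measure.restrict_apply measurableSet_ball]
          simp only [ENNReal.toReal_natCast, one_div]
          gcongr

end Supersolution

section Growth

variable {n : ℕ} [NeZero n] {lam Lam M B r t : ℝ} {b f u φ : EuclideanSpace ℝ (Fin n) → ℝ}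
  {z y : EuclideanSpace ℝ (Fin n)}

theorem IsBarrier.mul_volume_ball_rpow_inv_le (hφ : IsBarrier lam Lam M B z r t φ)
    (hlam : 0 ≤ lam) (hLam : lam ≤ Lam) (hB : 0 ≤ B)
    (hu : IsPucciSupersolution lam Lam b f u (closedBall z (3 * r)))
    (hb : AEStronglyMeasurable b (volume.restrict (closedBall z (3 * r))))
    (hf : AEStronglyMeasurable f (volume.restrict (closedBall z (3 * r))))
    (hr : 0 < r) (ht : 0 < t) (hy : y ∈ closedBall z (2 * r)) (hyt : u y ≤ t) :
    ENNReal.ofReal lam *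
        (n * volume (ball (0 : EuclideanSpace ℝ (Fin n)) (t / (6 * r))) ^ (n : ℝ)⁻¹) ≤
      eLpNorm (fun x => max (f x) 0) n (volume.restrict (closedBall z (3 * r))) +
        ENNReal.ofReal ((1 + B) * (t / r)) *
          eLpNorm b n (volume.restrict (closedBall z (3 * r))) +
        ENNReal.ofReal (B * (t / r ^ 2)) *
          volume (ball z r ∩ {x | u x ≤ M * t}) ^ (n : ℝ)⁻¹ := by
  have hslope : t / (6 * r) * diam (closedBall z (3 * r)) < -(u y - φ y) := by
    calc t / (6 * r) * diam (closedBall z (3 * r)) ≤ t / (6 * r) * (2 * (3 * r)) := by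
          gcongr
          exact diam_closedBall (by positivity)
      _ = t := by field_simp; norm_num
      _ < -(u y - φ y) := by linarith [hφ.three_mul_le y hy]
  have hfrontier : ∀ x ∈ frontier (closedBall z (3 * r)), 0 ≤ u x - φ x := fun x hx => by
    have hx' := frontier_closedBall_subset_sphere hx
    rw [hφ.eq_zero x hx', sub_zero]
    exact hu.nonneg x (sphere_subset_closedBall hx')
  have hABP := mul_volume_ball_rpow_inv_le_eLpNorm_trace_hess (isCompact_closedBall z (3 * r))
    (fun x hx => (hu.contDiffAt x hx).sub hφ.contDiff.contDiffAt) hfrontier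
    (closedBall_subset_closedBall (by linarith) hy) hslope
  exact (mul_le_mul_right hABP _).trans <|
    hφ.mul_eLpNorm_trace_hess_sub_le hlam hLam hu hb hf hB hr.le ht.le
      (div_le_div_of_nonneg_left ht.le hr (by linarith))

theorem le_mul_div_of_mul_div_le_add {a η v : ℝ} (hη₀ : 0 ≤ η)
    (hη : 12 * (2 + B) * η ≤ a) (hv : 0 ≤ v) (hr : 0 < r) (hr₁ : r ≤ 1) (ht : 0 < t)
    (h : a * (t / (6 * r)) ≤ η * t + (1 + B) * (t / r) * η + B * (t / r ^ 2) * v) :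
    a ≤ 12 * (1 + B) * (v / r) := by
  have hscaled : 2 * a ≤ 12 * (η * r + (1 + B) * η + B * (v / r)) := by
    refine le_of_mul_le_mul_left ?_ (by positivity : 0 < t / (12 * r))
    calc t / (12 * r) * (2 * a) = a * (t / (6 * r)) := by field_simp; ring
      _ ≤ _ := h
      _ = t / (12 * r) * (12 * (η * r + (1 + B) * η + B * (v / r))) := by field_simp
  nlinarith [mul_le_of_le_one_right hη₀ hr₁, div_nonneg hv hr.le]

theorem IsBarrier.mul_volume_ball_rpow_inv_le_sublevel {k η : ℝ}
    (hφ : IsBarrier lam Lam M B z r t φ) (hlam : 0 ≤ lam) (hLam : lam ≤ Lam) (hB : 0 ≤ B)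
    (hk : volume (ball (0 : EuclideanSpace ℝ (Fin n)) 1) ^ (n : ℝ)⁻¹ = ENNReal.ofReal k)
    (hη₀ : 0 ≤ η) (hη : 12 * (2 + B) * η ≤ lam * n * k)
    (hu : IsPucciSupersolution lam Lam b f u (closedBall z (3 * r)))
    (hb : AEStronglyMeasurable b (volume.restrict (closedBall z (3 * r))))
    (hf : AEStronglyMeasurable f (volume.restrict (closedBall z (3 * r))))
    (hr : 0 < r) (hr₁ : r ≤ 1) (ht : 0 < t)
    (hbη : eLpNorm b n (volume.restrict (closedBall z (3 * r))) ≤ ENNReal.ofReal η)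
    (hfη : eLpNorm (fun x => max (f x) 0) n (volume.restrict (closedBall z (3 * r))) ≤
      ENNReal.ofReal (η * t)) (hy : y ∈ closedBall z (2 * r)) (hyt : u y ≤ t) :
    ENNReal.ofReal (lam * n / (12 * (1 + B))) * volume (ball z r) ^ (n : ℝ)⁻¹ ≤
      volume (ball z r ∩ {x | u x ≤ M * t}) ^ (n : ℝ)⁻¹ := by
  have hfin : volume (ball z r ∩ {x | u x ≤ M * t}) ≠ ∞ :=
    ((measure_mono inter_subset_left).trans_lt measure_ball_lt_top).ne
  obtain ⟨v, hv, hV⟩ : ∃ v : ℝ, 0 ≤ v ∧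
      volume (ball z r ∩ {x | u x ≤ M * t}) ^ (n : ℝ)⁻¹ = ENNReal.ofReal v :=
    ⟨_, ENNReal.toReal_nonneg,
      (ENNReal.ofReal_toReal (ENNReal.rpow_ne_top_of_nonneg (by positivity) hfin)).symm⟩
  have hABP := hφ.mul_volume_ball_rpow_inv_le hlam hLam hB hu hb hf hr ht hy hyt
  rw [volume_ball_rpow_inv 0 (by positivity), hk, hV] at hABP
  have hABP' : lam * (n * (t / (6 * r) * k)) ≤
      η * t + (1 + B) * (t / r) * η + B * (t / r ^ 2) * v := by
    rw [← ENNReal.ofReal_le_ofReal_iff (by positivity), ENNReal.ofReal_mul hlam,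
      ENNReal.ofReal_mul (by positivity), ENNReal.ofReal_mul (by positivity),
      ENNReal.ofReal_natCast, ENNReal.ofReal_add (by positivity) (by positivity),
      ENNReal.ofReal_add (by positivity) (by positivity),
      ENNReal.ofReal_mul (p := (1 + B) * (t / r)) (by positivity),
      ENNReal.ofReal_mul (p := B * (t / r ^ 2)) (by positivity)]
    refine hABP.trans ?_
    gcongr
  have habsorb : lam * n * k ≤ 12 * (1 + B) * (v / r) :=
    le_mul_div_of_mul_div_le_add hη₀ hη hv hr hr₁ ht (le_of_eq_of_le (by ring) hABP')
  rw [volume_ball_rpow_inv z hr, hk, hV, ← ENNReal.ofReal_mul hr.le,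
    ← ENNReal.ofReal_mul (by positivity)]
  refine ENNReal.ofReal_le_ofReal ?_
  calc lam * n / (12 * (1 + B)) * (r * k) = lam * n * k * (r / (12 * (1 + B))) := by ring
    _ ≤ 12 * (1 + B) * (v / r) * (r / (12 * (1 + B))) := by gcongr
    _ = v := by field_simp

theorem exists_mul_volume_ball_le_volume_sublevel (n : ℕ) [NeZero n] (hlam : 0 < lam)
    (hLam : lam ≤ Lam) : ∃ M η : ℝ, ∃ δ : ℝ≥0∞, 1 < M ∧ 0 < η ∧ δ ≠ 0 ∧
    ∀ (b f u : EuclideanSpace ℝ (Fin n) → ℝ) (z : EuclideanSpace ℝ (Fin n)) (r t : ℝ),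
      0 < r → r ≤ 1 → 0 < t →
      IsPucciSupersolution lam Lam b f u (closedBall z (3 * r)) →
      AEStronglyMeasurable b (volume.restrict (closedBall z (3 * r))) →
      AEStronglyMeasurable f (volume.restrict (closedBall z (3 * r))) →
      eLpNorm b n (volume.restrict (closedBall z (3 * r))) ≤ ENNReal.ofReal η →
      eLpNorm (fun x => max (f x) 0) n (volume.restrict (closedBall z (3 * r))) ≤
        ENNReal.ofReal (η * t) →
      ∀ y ∈ closedBall z (2 * r), u y ≤ t →
        δ * volume (ball z r) ≤ volume (ball z r ∩ {x | u x ≤ M * t}) := by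
  obtain ⟨M, B, hM, hB, hbarrier⟩ := exists_isBarrier n hlam (hlam.le.trans hLam)
  have hn : (0 : ℝ) < n := Nat.cast_pos.2 (NeZero.pos n)
  let κ := volume (ball (0 : EuclideanSpace ℝ (Fin n)) 1) ^ (n : ℝ)⁻¹
  have hκ : κ ≠ ∞ := ENNReal.rpow_ne_top_of_nonneg (by positivity) measure_ball_lt_top.ne
  have hκ₀ : 0 < κ.toReal := ENNReal.toReal_pos
    (ENNReal.rpow_pos (measure_ball_pos _ _ one_pos) measure_ball_lt_top.ne).ne' hκ
  refine ⟨M, lam * n * κ.toReal / (12 * (2 + B)), ENNReal.ofReal (lam * n / (12 * (1 + B))) ^ n, hM,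
    by positivity, (ENNReal.pow_pos (ENNReal.ofReal_pos.2 (by positivity)) n).ne',
    fun b f u z r t hr hr₁ ht hu hb hf hbη hfη y hy hyt => ?_⟩
  obtain ⟨φ, hφ⟩ := hbarrier z r t hr ht.le
  have hroot := hφ.mul_volume_ball_rpow_inv_le_sublevel hlam.le hLam hB
    (ENNReal.ofReal_toReal hκ).symm (by positivity) (mul_div_cancel₀ _ (by positivity)).le
    hu hb hf hr hr₁ ht hbη hfη hy hyt
  simpa only [mul_pow, ENNReal.rpow_inv_natCast_pow (NeZero.ne n)] using
    pow_le_pow_left₀ zero_le hroot n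

end Growth

section InkSpots

variable {E : Type*} [NormedAddCommGroup E] [NormedSpace ℝ E] {c : E} {R r₀ : ℝ} {F : Set E}

theorem exists_ball_subset_ball_of_dist_add_le {z : E} {r r' : ℝ} (hrr' : r ≤ r')
    (hr' : r' ≤ 3 / 2 * r) (hr'R : r' ≤ R) (hz : dist z c + r ≤ R) :
    ∃ z', dist z' c + r' ≤ R ∧ ball z r ⊆ ball z' r' ∧ ball z' r' ⊆ closedBall z (2 * r) := by
  obtain ⟨σ, hσ₀, hσ₁, hσ⟩ : ∃ σ : ℝ, 0 ≤ σ ∧ σ ≤ 1 ∧ σ * (R - r) = r' - r := by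
    rcases (hrr'.trans hr'R).eq_or_lt with rfl | hrR
    · exact ⟨0, le_rfl, zero_le_one, by linarith⟩
    · have hpos := sub_pos.2 hrR
      exact ⟨(r' - r) / (R - r), div_nonneg (by linarith) hpos.le,
        (div_le_one hpos).2 (by linarith), div_mul_cancel₀ _ hpos.ne'⟩
  have hdist : dist z (AffineMap.lineMap z c σ) ≤ r' - r := by
    rw [dist_left_lineMap, Real.norm_of_nonneg hσ₀, ← hσ]
    gcongr
    linarith
  refine ⟨AffineMap.lineMap z c σ, ?_, ball_subset_ball' (by linarith),
    (ball_subset_ball' ?_).trans ball_subset_closedBall⟩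
  · rw [dist_lineMap_right, Real.norm_of_nonneg (by linarith)]
    have := mul_le_mul_of_nonneg_left (by linarith : dist z c ≤ R - r) (sub_nonneg.2 hσ₁)
    linarith
  · rw [dist_comm]
    linarith

theorem exists_ball_subset_and_of_forall_closedBall (good : E → ℝ → Prop) (hr₀ : 0 < r₀)
    (hr₀R : r₀ ≤ R) (hF : IsOpen F) (hFR : F ⊆ ball c R)
    (hgood : ∀ z ∈ ball c R, ∀ r ∈ Ioc 0 r₀, ∀ y ∈ closedBall z (2 * r), y ∈ ball c R → y ∉ F →
      good z r)
    (hgood₀ : ∀ z ∈ ball c R, good z r₀) {x : E} (hx : x ∈ F) :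
    ∃ z, ∃ r ∈ Ioc 0 r₀, x ∈ ball z r ∧ ball z r ⊆ F ∧ good z r := by
  -- A ball whose radius is nearly maximal among the balls around `x` inside `F` either has the
  -- maximal radius `r₀`, or becomes large enough to leave `F` when enlarged by the factor `3 / 2`.
  let radii := {r ∈ Ioc 0 r₀ | ∃ z, dist z c + r ≤ R ∧ x ∈ ball z r ∧ ball z r ⊆ F}
  have hbdd : BddAbove radii := ⟨r₀, fun r hr => hr.1.2⟩
  have hne : radii.Nonempty := by
    obtain ⟨ρ, hρ, hρF⟩ := isOpen_iff.1 hF x hx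
    have hxR : 0 < R - dist x c := sub_pos.2 (hFR hx)
    let s := min ρ (min r₀ (R - dist x c))
    have hs : 0 < s := by positivity
    have hsr : s ≤ min r₀ (R - dist x c) := min_le_right _ _
    exact ⟨s, ⟨hs, hsr.trans (min_le_left _ _)⟩, x, by linarith [hsr.trans (min_le_right _ _)],
      mem_ball_self hs, (ball_subset_ball (min_le_left _ _)).trans hρF⟩
  have hsup : 0 < sSup radii := hne.some_mem.1.1.trans_le (le_csSup hbdd hne.some_mem)
  obtain ⟨r, ⟨⟨hr, hrr₀⟩, z, hzR, hxz, hzF⟩, hlt⟩ :=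
    exists_lt_of_lt_csSup hne (by linarith : 2 / 3 * sSup radii < sSup radii)
  let r' := min (3 / 2 * r) r₀
  have hrr' : r ≤ r' := le_min (by linarith) hrr₀
  obtain ⟨z', hz'R, hsub, hsup'⟩ := exists_ball_subset_ball_of_dist_add_le hrr' (min_le_left _ _)
    ((min_le_right _ _).trans hr₀R) hzR
  by_cases hz'F : ball z' r' ⊆ F
  · have hr'sup : r' ≤ sSup radii := le_csSup hbdd
      ⟨⟨hr.trans_le hrr', min_le_right _ _⟩, z', hz'R, hsub hxz, hz'F⟩
    have hr' : r' = r₀ := (min_choice _ _).resolve_left fun h => by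
      linarith [h.symm.trans_le hr'sup]
    rw [hr'] at hz'F hsub hz'R
    exact ⟨z', r₀, ⟨hr₀, le_rfl⟩, hsub hxz, hz'F, hgood₀ z' (by rw [mem_ball]; linarith)⟩
  · obtain ⟨y, hy, hyF⟩ := not_subset.1 hz'F
    have hyR : y ∈ ball c R := ball_subset_ball' (by linarith) hy
    exact ⟨z, r, ⟨hr, hrr₀⟩, hxz, hzF,
      hgood z (by rw [mem_ball]; linarith) r ⟨hr, hrr₀⟩ y (hsup' hy) hyR hyF⟩

variable [MeasurableSpace E] [BorelSpace E] [FiniteDimensional ℝ E] {μ : Measure E}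
  [μ.IsAddHaarMeasure] {δ : ℝ≥0∞}

theorem div_mul_measure_le_measure_inter_of_forall_mem {G : Set E}
    (h : ∀ x ∈ F, ∃ z, ∃ r ∈ Ioc 0 r₀, x ∈ ball z r ∧ ball z r ⊆ F ∧
      δ * μ (ball z r) ≤ μ (ball z r ∩ G)) :
    δ / 5 ^ Module.finrank ℝ E * μ F ≤ μ (F ∩ G) := by
  choose! z r hr hxz hzF hδ using h
  obtain ⟨J, hJF, hJdisj, hJcover⟩ := Vitali.exists_disjoint_subfamily_covering_enlargement_ball
    F z r r₀ (fun x hx => (hr x hx).2) 5 (by norm_num)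
  have hJ : J.Countable := hJdisj.countable_of_isOpen (fun _ _ => isOpen_ball) fun a ha =>
    ⟨z a, mem_ball_self (hr a (hJF ha)).1⟩
  have hcover : F ⊆ ⋃ a ∈ J, ball (z a) (5 * r a) := fun x hx => by
    obtain ⟨a, ha, hsub⟩ := hJcover x hx
    exact mem_biUnion ha (hsub (hxz x hx))
  have hscale (a : J) : δ / 5 ^ Module.finrank ℝ E * μ (ball (z a) (5 * r a)) ≤
      μ.restrict G (ball (z a) (r a)) := by
    rw [Measure.restrict_apply measurableSet_ball]
    refine le_of_eq_of_le ?_ (hδ a (hJF a.2))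
    rw [Measure.addHaar_ball_mul_of_pos μ _ (by norm_num), ← Measure.addHaar_ball_center μ (z a),
      ← mul_assoc, ENNReal.ofReal_pow (by norm_num), ENNReal.ofReal_ofNat,
      ENNReal.div_mul_cancel (by simp) (by simp)]
  calc δ / 5 ^ Module.finrank ℝ E * μ F
      ≤ δ / 5 ^ Module.finrank ℝ E * ∑' a : J, μ (ball (z a) (5 * r a)) := by
        gcongr
        exact (measure_mono hcover).trans (measure_biUnion_le _ hJ _)
    _ ≤ ∑' a : J, μ.restrict G (ball (z a) (r a)) :=
        ENNReal.tsum_mul_left.symm.trans_le (ENNReal.tsum_le_tsum hscale)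
    _ = μ.restrict G (⋃ a ∈ J, ball (z a) (r a)) :=
        (measure_biUnion hJ hJdisj fun _ _ => measurableSet_ball).symm
    _ = μ ((⋃ a ∈ J, ball (z a) (r a)) ∩ G) :=
        Measure.restrict_apply (isOpen_biUnion fun _ _ => isOpen_ball).measurableSet
    _ ≤ μ (F ∩ G) := by
        gcongr
        exact iUnion₂_subset fun a ha => hzF a (hJF ha)

end InkSpots

section SuperlevelSets

variable {E : Type*} [NormedAddCommGroup E] [MeasurableSpace E]

/-- The point-to-measure estimate on `ball c R`, for radii up to `r₀` and levels from `t₀` on: if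
`u ≤ t` at some point of the ball of radius `2r` about `z`, then `u ≤ Mt` on at least the portion
`δ` of the ball of radius `r` about `z`. -/
def PointToMeasure (μ : Measure E) (u : E → ℝ) (c : E) (R r₀ : ℝ) (δ : ℝ≥0∞) (M t₀ : ℝ) : Prop :=
  ∀ z ∈ ball c R, ∀ r ∈ Ioc 0 r₀, ∀ t ≥ t₀, ∀ y ∈ closedBall z (2 * r), u y ≤ t →
    δ * μ (ball z r) ≤ μ (ball z r ∩ {x | u x ≤ M * t})

namespace PointToMeasure

variable [NormedSpace ℝ E] {μ : Measure E} {u : E → ℝ} {c x : E} {R r₀ M t₀ : ℝ} {δ : ℝ≥0∞}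

theorem mul_measure_ball_le_of_dist_le [μ.IsOpenPosMeasure]
    (h : PointToMeasure μ u c R r₀ δ M t₀) (hr₀ : 0 < r₀)
    (hδ : δ ≠ 0) (hM : 1 ≤ M) (ht₀ : 0 ≤ t₀) (hx : x ∈ ball c R) (hux : u x ≤ t₀) (k : ℕ) :
    ∀ z ∈ ball c R, dist x z ≤ (k + 1) * r₀ →
      δ * μ (ball z r₀) ≤ μ (ball z r₀ ∩ {y | u y ≤ M ^ (k + 1) * t₀}) := by
  induction k with
  | zero =>
    intro z hz hxz
    rw [zero_add, pow_one]
    refine h z hz r₀ ⟨hr₀, le_rfl⟩ t₀ le_rfl x (mem_closedBall.2 ?_) hux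
    norm_num at hxz
    linarith
  | succ k ih =>
    intro z hz hxz
    push_cast at hxz
    -- The induction hypothesis is applied at the point dividing the segment from `x` to `z` in the
    -- ratio `k + 1 : 1`, whose ball of radius `r₀` lies within reach of the ball about `z`.
    let s : ℝ := (k + 1) / (k + 2)
    have hs : 1 - s = 1 / (k + 2) := by simp only [s]; field_simp; ring
    have hs₁ : 0 ≤ 1 - s := hs ▸ by positivity
    let z' := AffineMap.lineMap x z s
    have hz' : z' ∈ ball c R :=
      (convex_ball c R).lineMap_mem hx hz ⟨by positivity, sub_nonneg.1 hs₁⟩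
    have hxz' : dist x z' ≤ (k + 1) * r₀ := by
      rw [dist_left_lineMap, Real.norm_of_nonneg (by positivity)]
      calc s * dist x z ≤ s * ((k + 1 + 1) * r₀) := by gcongr
        _ = (k + 1) * r₀ := by simp only [s]; field_simp; ring
    have hz'z : dist z' z ≤ r₀ := by
      rw [dist_lineMap_right, Real.norm_of_nonneg hs₁, hs]
      calc 1 / (k + 2) * dist x z ≤ 1 / (k + 2) * ((k + 1 + 1) * r₀) := by gcongr
        _ = r₀ := by field_simp; ring
    have hpos := (ENNReal.mul_pos hδ (measure_ball_pos μ z' hr₀).ne').trans_le (ih z' hz' hxz')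
    obtain ⟨y, hy, huy⟩ := nonempty_of_measure_ne_zero hpos.ne'
    rw [pow_succ', mul_assoc]
    refine h z hz r₀ ⟨hr₀, le_rfl⟩ _ (le_mul_of_one_le_left ht₀ (one_le_pow₀ hM)) y ?_ huy
    rw [mem_closedBall]
    linarith [dist_triangle y z' z, mem_ball.1 hy]

variable [BorelSpace E] [FiniteDimensional ℝ E] [μ.IsAddHaarMeasure]

theorem div_mul_measure_superlevel_le (h : PointToMeasure μ u c R r₀ δ M t₀) (hr₀ : 0 < r₀)
    (hr₀R : r₀ ≤ R) (hδ : δ ≠ 0) (hM : 1 ≤ M) (ht₀ : 0 ≤ t₀) (hu : ContinuousOn u (ball c R))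
    (hx : x ∈ ball c R) (hux : u x ≤ t₀) {N m : ℕ} (hN : 2 * R ≤ (N + 1) * r₀) (hNm : N ≤ m) :
    δ / 5 ^ Module.finrank ℝ E * μ (ball c R ∩ {y | M ^ m * t₀ < u y}) ≤
      μ (ball c R ∩ {y | M ^ m * t₀ < u y} ∩ {y | u y ≤ M ^ (m + 1) * t₀}) := by
  refine div_mul_measure_le_measure_inter_of_forall_mem fun y hy =>
    exists_ball_subset_and_of_forall_closedBall _ hr₀ hr₀R
      (hu.isOpen_inter_preimage isOpen_ball isOpen_Ioi) inter_subset_left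
      (fun z hz r hr y hy hyR hyF => ?_) (fun z hz => ?_) hy
  · rw [pow_succ', mul_assoc]
    exact h z hz r hr _ (le_mul_of_one_le_left ht₀ (one_le_pow₀ hM)) y hy
      (not_lt.1 fun hlt => hyF ⟨hyR, hlt⟩)
  · refine (h.mul_measure_ball_le_of_dist_le hr₀ hδ hM ht₀ hx hux N z hz ?_).trans ?_
    · linarith [dist_triangle_right x z c, mem_ball.1 hx, mem_ball.1 hz]
    · gcongr

theorem measure_superlevel_le (h : PointToMeasure μ u c R r₀ δ M t₀) (hr₀ : 0 < r₀)
    (hr₀R : r₀ ≤ R) (hδ : δ ≠ 0) (hM : 1 ≤ M) (ht₀ : 0 ≤ t₀) (hu : ContinuousOn u (ball c R))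
    (hx : x ∈ ball c R) (hux : u x ≤ t₀) {N : ℕ} (hN : 2 * R ≤ (N + 1) * r₀) (k : ℕ) :
    μ (ball c R ∩ {y | M ^ (N + k) * t₀ < u y}) ≤
      (1 - δ / 5 ^ Module.finrank ℝ E) ^ k * μ (ball c R) := by
  induction k with
  | zero => simpa using measure_mono inter_subset_left
  | succ k ih =>
    set θ := δ / 5 ^ Module.finrank ℝ E
    set F := fun k => ball c R ∩ {y | M ^ (N + k) * t₀ < u y}
    have hF : MeasurableSet (F (k + 1)) :=
      (hu.isOpen_inter_preimage isOpen_ball isOpen_Ioi).measurableSet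
    have hfin : μ (F k) ≠ ∞ := ((measure_mono inter_subset_left).trans_lt measure_ball_lt_top).ne
    have hink : θ * μ (F k) ≤ μ (F k ∩ {y | u y ≤ M ^ (N + k + 1) * t₀}) :=
      h.div_mul_measure_superlevel_le hr₀ hr₀R hδ hM ht₀ hu hx hux hN (by omega)
    have hanti : F (k + 1) ⊆ F k := fun y hy => ⟨hy.1, lt_of_le_of_lt
      (mul_le_mul_of_nonneg_right (pow_le_pow_right₀ hM (by omega)) ht₀) hy.2⟩
    have hsplit : μ (F (k + 1)) + θ * μ (F k) ≤ μ (F k) := by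
      calc μ (F (k + 1)) + θ * μ (F k)
          ≤ μ (F k ∩ F (k + 1)) + μ (F k \ F (k + 1)) := by
            gcongr
            · exact subset_inter hanti le_rfl
            · refine hink.trans (measure_mono ?_)
              rintro y ⟨hyF, hyt : u y ≤ M ^ (N + k + 1) * t₀⟩
              exact ⟨hyF, fun hlt => hyt.not_gt hlt.2⟩
        _ = μ (F k) := measure_inter_add_sdiff (F k) hF
    calc μ (F (k + 1)) ≤ μ (F k) - θ * μ (F k) :=
          ENNReal.le_sub_of_add_le_right
            ((le_add_self.trans hsplit).trans_lt hfin.lt_top).ne hsplit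
      _ = (1 - θ) * μ (F k) := by rw [ENNReal.sub_mul fun _ _ => hfin, one_mul]
      _ ≤ (1 - θ) * ((1 - θ) ^ k * μ (ball c R)) := by gcongr
      _ = (1 - θ) ^ (k + 1) * μ (ball c R) := by rw [pow_succ', mul_assoc]

end PointToMeasure

end SuperlevelSets

section Integration

theorem exists_pos_ofReal_rpow_mul_lt_one {M : ℝ} (hM : 0 < M) {θ : ℝ≥0∞} (hθ : θ < 1) :
    ∃ ε : ℝ, 0 < ε ∧ ENNReal.ofReal M ^ ε * θ < 1 := by
  have hlim : Tendsto (fun ε : ℝ => ENNReal.ofReal (M ^ ε) * θ) (𝓝[>] 0) (𝓝 (1 * θ)) := by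
    refine ENNReal.Tendsto.mul_const ?_ (Or.inl one_ne_zero)
    rw [← ENNReal.ofReal_one, ← Real.rpow_zero M]
    exact ENNReal.tendsto_ofReal
      ((Real.continuousAt_const_rpow hM.ne').tendsto.mono_left nhdsWithin_le_nhds)
  rw [one_mul] at hlim
  obtain ⟨ε, hlt, hε⟩ := ((hlim.eventually_lt_const hθ).and self_mem_nhdsWithin).exists
  exact ⟨ε, hε, by rwa [ENNReal.ofReal_rpow_of_pos hM]⟩

theorem ofReal_rpow_le_add_tsum_indicator {α : Type*} {u : α → ℝ} {M T ε : ℝ} (hM : 1 < M)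
    (hT : 0 < T) (hε : 0 ≤ ε) (x : α) :
    ENNReal.ofReal (u x) ^ ε ≤ ENNReal.ofReal T ^ ε + ∑' k : ℕ,
      ENNReal.ofReal (M ^ (k + 1) * T) ^ ε * {y | M ^ k * T < u y}.indicator 1 x := by
  have hex : ∃ k : ℕ, u x ≤ M ^ k * T := by
    obtain ⟨k, hk⟩ := pow_unbounded_of_one_lt (u x / T) hM
    exact ⟨k, ((div_lt_iff₀ hT).1 hk).le⟩
  classical
  have hle := Nat.find_spec hex
  rcases hk : Nat.find hex with _ | k
  · rw [hk, pow_zero, one_mul] at hle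
    exact le_add_right (by gcongr)
  · rw [hk] at hle
    have hlt : x ∈ {y | M ^ k * T < u y} := not_le.1 (Nat.find_min hex (by omega))
    refine le_add_left (le_trans ?_ (ENNReal.le_tsum k))
    rw [indicator_of_mem hlt, Pi.one_apply, mul_one]
    gcongr

theorem lintegral_rpow_le_of_measure_superlevel_le {α : Type*} [MeasurableSpace α] {μ : Measure α}
    {u : α → ℝ} (hu : AEMeasurable u μ) {M T ε : ℝ} (hM : 1 < M) (hT : 0 < T) (hε : 0 ≤ ε)
    {θ A : ℝ≥0∞} (hdecay : ∀ k : ℕ, μ {x | M ^ k * T < u x} ≤ θ ^ k * A) :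
    ∫⁻ x, ENNReal.ofReal (u x) ^ ε ∂μ ≤ ENNReal.ofReal T ^ ε *
      (μ univ + ENNReal.ofReal M ^ ε * A * (1 - ENNReal.ofReal M ^ ε * θ)⁻¹) := by
  have hmeas (k : ℕ) : NullMeasurableSet {x | M ^ k * T < u x} μ :=
    nullMeasurableSet_lt aemeasurable_const hu
  have hmeas' (k : ℕ) : AEMeasurable ({x | M ^ k * T < u x}.indicator (1 : α → ℝ≥0∞)) μ :=
    aemeasurable_const.indicator₀ (hmeas k)
  have hpow (k : ℕ) : ENNReal.ofReal (M ^ (k + 1) * T) ^ ε =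
      ENNReal.ofReal T ^ ε * (ENNReal.ofReal M ^ ε * (ENNReal.ofReal M ^ ε) ^ k) := by
    rw [ENNReal.ofReal_mul (by positivity), ENNReal.ofReal_pow (by linarith),
      ENNReal.mul_rpow_of_nonneg _ _ hε, mul_comm, ← pow_succ', ← ENNReal.rpow_natCast_mul,
      ← ENNReal.rpow_mul_natCast, mul_comm ε]
  calc ∫⁻ x, ENNReal.ofReal (u x) ^ ε ∂μ
      ≤ ∫⁻ x, ENNReal.ofReal T ^ ε + ∑' k : ℕ,
          ENNReal.ofReal (M ^ (k + 1) * T) ^ ε * {y | M ^ k * T < u y}.indicator 1 x ∂μ :=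
        lintegral_mono (ofReal_rpow_le_add_tsum_indicator hM hT hε)
    _ = ENNReal.ofReal T ^ ε * μ univ +
          ∑' k : ℕ, ENNReal.ofReal (M ^ (k + 1) * T) ^ ε * μ {x | M ^ k * T < u x} := by
        rw [lintegral_add_left measurable_const, lintegral_const, lintegral_tsum fun k =>
          (hmeas' k).const_mul _]
        simp_rw [lintegral_const_mul'' _ (hmeas' _), lintegral_indicator_one₀ (hmeas _)]
    _ ≤ ENNReal.ofReal T ^ ε * μ univ + ∑' k : ℕ, ENNReal.ofReal T ^ ε *
          (ENNReal.ofReal M ^ ε * A * (ENNReal.ofReal M ^ ε * θ) ^ k) := by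
        refine add_le_add_right (ENNReal.tsum_le_tsum fun k => ?_) _
        rw [hpow, mul_pow]
        grw [hdecay k]
        exact le_of_eq (by ring)
    _ = _ := by
        rw [ENNReal.tsum_mul_left, ENNReal.tsum_mul_left, ENNReal.tsum_geometric, ← mul_add]

end Integration

theorem exists_lintegral_rpow_le_of_pointToMeasure {E : Type*} [NormedAddCommGroup E]
    [NormedSpace ℝ E] [MeasurableSpace E] [BorelSpace E] [FiniteDimensional ℝ E] (μ : Measure E)
    [μ.IsAddHaarMeasure] (c : E) {R r₀ M : ℝ} {δ : ℝ≥0∞} (hr₀ : 0 < r₀) (hr₀R : r₀ ≤ R)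
    (hM : 1 < M) (hδ : δ ≠ 0) :
    ∃ ε : ℝ, 0 < ε ∧ ∃ C : ℝ≥0∞, C ≠ ∞ ∧ ∀ (u : E → ℝ) (t₀ : ℝ), 0 < t₀ →
      ContinuousOn u (ball c R) → PointToMeasure μ u c R r₀ δ M t₀ →
      (∃ x ∈ ball c R, u x ≤ t₀) →
        ∫⁻ x in ball c R, ENNReal.ofReal (u x) ^ ε ∂μ ≤ C * ENNReal.ofReal t₀ ^ ε := by
  obtain ⟨N, hN⟩ := exists_nat_ge (2 * R / r₀)
  have hNR : 2 * R ≤ (N + 1) * r₀ := (div_le_iff₀ hr₀).1 (hN.trans (by linarith))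
  have hθ : 1 - δ / 5 ^ Module.finrank ℝ E < 1 :=
    ENNReal.sub_lt_self ENNReal.one_ne_top one_ne_zero (ENNReal.div_ne_zero.2 ⟨hδ, by simp⟩)
  obtain ⟨ε, hε, hεlt⟩ := exists_pos_ofReal_rpow_mul_lt_one (zero_lt_one.trans hM) hθ
  set A := μ (ball c R)
  have hA : A ≠ ∞ := measure_ball_lt_top.ne
  set Q := ENNReal.ofReal M ^ ε
  have hQ : Q ≠ ∞ := ENNReal.rpow_ne_top_of_nonneg hε.le ENNReal.ofReal_ne_top
  refine ⟨ε, hε, ENNReal.ofReal (M ^ N) ^ ε *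
    (A + Q * A * (1 - Q * (1 - δ / 5 ^ Module.finrank ℝ E))⁻¹), ?_, ?_⟩
  · exact ENNReal.mul_ne_top (ENNReal.rpow_ne_top_of_nonneg hε.le ENNReal.ofReal_ne_top)
      (ENNReal.add_ne_top.2 ⟨hA, ENNReal.mul_ne_top (ENNReal.mul_ne_top hQ hA)
        (ENNReal.inv_ne_top.2 (tsub_pos_of_lt hεlt).ne')⟩)
  intro u t₀ ht₀ hu h ⟨x, hx, hux⟩
  have hdecay (k : ℕ) : μ.restrict (ball c R) {y | M ^ k * (M ^ N * t₀) < u y} ≤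
      (1 - δ / 5 ^ Module.finrank ℝ E) ^ k * A := by
    rw [Measure.restrict_apply₀' measurableSet_ball.nullMeasurableSet, inter_comm, ← mul_assoc,
      ← pow_add, add_comm k]
    exact h.measure_superlevel_le hr₀ hr₀R hδ hM.le ht₀.le hu hx hux hNR k
  refine (lintegral_rpow_le_of_measure_superlevel_le (hu.aemeasurable measurableSet_ball) hM
    (by positivity) hε.le hdecay).trans_eq ?_
  rw [Measure.restrict_apply_univ, ENNReal.ofReal_mul (by positivity),
    ENNReal.mul_rpow_of_nonneg _ _ hε.le]
  ring

theorem exists_mul_lintegral_rpow_le_of_pointToMeasure {E : Type*} [NormedAddCommGroup E]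
    [NormedSpace ℝ E] [MeasurableSpace E] [BorelSpace E] [FiniteDimensional ℝ E] (μ : Measure E)
    [μ.IsAddHaarMeasure] (c : E) {R r₀ M : ℝ} {δ : ℝ≥0∞} (hr₀ : 0 < r₀) (hr₀R : r₀ ≤ R)
    (hM : 1 < M) (hδ : δ ≠ 0) :
    ∃ ε a : ℝ, 0 < ε ∧ 0 < a ∧ ∀ (u : E → ℝ) (t₀ : ℝ), 0 < t₀ → ContinuousOn u (ball c R) →
      PointToMeasure μ u c R r₀ δ M t₀ → (∃ x ∈ ball c R, u x ≤ t₀) →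
        ENNReal.ofReal a * (∫⁻ x in ball c R, ENNReal.ofReal (u x) ^ ε ∂μ) ^ (1 / ε) ≤
          ENNReal.ofReal t₀ := by
  obtain ⟨ε, hε, C, hC, hint⟩ := exists_lintegral_rpow_le_of_pointToMeasure μ c hr₀ hr₀R hM hδ
  obtain ⟨a, ha, haC⟩ := ENNReal.exists_nnreal_pos_mul_lt
    (ENNReal.rpow_ne_top_of_nonneg (one_div_pos.2 hε).le hC) one_ne_zero
  refine ⟨ε, a, hε, ha, fun u t₀ ht₀ hu h hx => ?_⟩
  rw [ENNReal.ofReal_coe_nnreal]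
  calc a * (∫⁻ x in ball c R, ENNReal.ofReal (u x) ^ ε ∂μ) ^ (1 / ε)
      ≤ a * (C * ENNReal.ofReal t₀ ^ ε) ^ (1 / ε) := by
        gcongr
        exact hint u t₀ ht₀ hu h hx
    _ = a * C ^ (1 / ε) * ENNReal.ofReal t₀ := by
        rw [ENNReal.mul_rpow_of_nonneg _ _ (by positivity), ← ENNReal.rpow_mul,
          mul_one_div_cancel hε.ne', ENNReal.rpow_one, mul_assoc]
    _ ≤ ENNReal.ofReal t₀ := mul_le_of_le_one_left' haC.le

section WeakHarnack

theorem exists_pos_forall_eLpNorm_restrict_closedBall_le {E F : Type*} [NormedAddCommGroup E]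
    [NormedSpace ℝ E] [Nontrivial E] [MeasurableSpace E] [BorelSpace E] [FiniteDimensional ℝ E]
    (μ : Measure E) [μ.IsAddHaarMeasure] [TopologicalSpace F] [ContinuousENorm F]
    {p q K η : ℝ≥0∞} (hp : p ≠ 0) (hpq : p < q) (hK : K ≠ ∞) (hη : η ≠ 0) :
    ∃ ρ : ℝ, 0 < ρ ∧ ∀ (g : E → F) (z : E), ∀ r ≤ ρ,
      AEStronglyMeasurable g (μ.restrict (closedBall z r)) →
      eLpNorm g q (μ.restrict (closedBall z r)) ≤ K →
        eLpNorm g p (μ.restrict (closedBall z r)) ≤ η := by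
  let a := 1 / p.toReal - 1 / q.toReal
  have ha : 0 < a := by
    simpa only [a, one_div, ← ENNReal.toReal_inv, sub_pos] using
      ENNReal.toReal_strict_mono (ENNReal.inv_ne_top.2 hp) (ENNReal.inv_lt_inv.2 hpq)
  have hlim : Tendsto (fun ρ : ℝ => K * μ (closedBall 0 ρ) ^ a) (𝓝[>] 0) (𝓝 0) := by
    have hvol : Tendsto (fun ρ : ℝ => μ (closedBall 0 ρ)) (𝓝[>] 0) (𝓝 0) := by
      have hinter := biInter_gt_closedBall (0 : E) 0
      rw [closedBall_zero] at hinter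
      rw [← measure_singleton (μ := μ) (0 : E), ← hinter]
      exact tendsto_measure_biInter_gt (fun r _ => measurableSet_closedBall.nullMeasurableSet)
        (fun _ _ _ h => closedBall_subset_closedBall h)
        ⟨1, one_pos, measure_closedBall_lt_top.ne⟩
    rw [← mul_zero K, ← ENNReal.zero_rpow_of_pos ha]
    exact ENNReal.Tendsto.const_mul (hvol.ennrpow_const a) (Or.inr hK)
  obtain ⟨ρ, hlt, hρ⟩ :=
    ((hlim.eventually_lt_const (pos_iff_ne_zero.2 hη)).and self_mem_nhdsWithin).exists
  refine ⟨ρ, hρ, fun g z r hr hg hgK =>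
    (eLpNorm_le_eLpNorm_mul_rpow_measure_univ hpq.le hg).trans (le_trans ?_ hlt.le)⟩
  rw [Measure.restrict_apply_univ, Measure.addHaar_closedBall_center μ z]
  gcongr

theorem exists_pointToMeasure (n : ℕ) [NeZero n] {lam Lam : ℝ} (hlam : 0 < lam)
    (hLam : lam ≤ Lam) {p q K : ℝ≥0∞} (hp : n ≤ p) (hq : n < q) (hK : K ≠ ∞) :
    ∃ M r₀ κ : ℝ, ∃ δ : ℝ≥0∞, 1 < M ∧ 0 < r₀ ∧ r₀ ≤ 1 ∧ 0 < κ ∧ δ ≠ 0 ∧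
      ∀ (b f u : EuclideanSpace ℝ (Fin n) → ℝ) (t₀ : ℝ), 0 < t₀ →
        AEStronglyMeasurable b (volume.restrict (ball 0 2)) →
        AEStronglyMeasurable f (volume.restrict (ball 0 2)) →
        eLpNorm b q (volume.restrict (ball 0 2)) ≤ K →
        eLpNorm (fun x => max (f x) 0) p (volume.restrict (ball 0 2)) ≤ ENNReal.ofReal (κ * t₀) →
        IsPucciSupersolution lam Lam b f u (ball 0 2) →
          PointToMeasure volume u 0 1 r₀ δ M t₀ := by
  obtain ⟨M, η, δ, hM, hη, hδ, hgrowth⟩ := exists_mul_volume_ball_le_volume_sublevel n hlam hLam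
  obtain ⟨ρ, hρ, hsmall⟩ := exists_pos_forall_eLpNorm_restrict_closedBall_le (F := ℝ)
    (volume : Measure (EuclideanSpace ℝ (Fin n))) (by simp [NeZero.ne n]) hq hK
    (ENNReal.ofReal_pos.2 hη).ne'
  let H := volume (ball (0 : EuclideanSpace ℝ (Fin n)) 2) ^ (1 / (n : ℝ≥0∞).toReal - 1 / p.toReal)
  have hH : H ≠ ∞ :=
    ENNReal.rpow_ne_top_of_nonneg (by
      simpa only [one_div, ← ENNReal.toReal_inv, sub_nonneg] using
        ENNReal.toReal_mono (by simp [NeZero.ne n]) (ENNReal.inv_le_inv.2 hp))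
      measure_ball_lt_top.ne
  obtain ⟨κ, hκ, hκH⟩ := ENNReal.exists_nnreal_pos_mul_lt hH (ENNReal.ofReal_pos.2 hη).ne'
  refine ⟨M, min (ρ / 3) (1 / 3), κ, δ, hM, by positivity,
    (min_le_right _ _).trans (by norm_num), hκ, hδ, ?_⟩
  intro b f u t₀ ht₀ hb hf hbK hfκ hu z hz r ⟨hr, hrr₀⟩ t ht y hy huy
  have hrρ : 3 * r ≤ ρ := by linarith [hrr₀.trans (min_le_left _ _)]
  have hr₁ : 3 * r ≤ 1 := by linarith [hrr₀.trans (min_le_right _ _)]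
  have hsub : closedBall z (3 * r) ⊆ ball 0 2 :=
    closedBall_subset_ball' (by linarith [mem_ball.1 hz])
  have hmono : volume.restrict (closedBall z (3 * r)) ≤ volume.restrict (ball 0 2) :=
    Measure.restrict_mono hsub le_rfl
  have hf₀ : AEStronglyMeasurable (fun x => max (f x) 0) (volume.restrict (ball 0 2)) :=
    hf.sup aestronglyMeasurable_const
  refine hgrowth b f u z r t hr (by linarith) (ht₀.trans_le ht) (hu.mono hsub)
    (hb.mono_measure hmono) (hf.mono_measure hmono)
    (hsmall b z _ hrρ (hb.mono_measure hmono) ((eLpNorm_mono_measure b hmono).trans hbK)) ?_ y hy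
    huy
  calc eLpNorm (fun x => max (f x) 0) n (volume.restrict (closedBall z (3 * r)))
      ≤ eLpNorm (fun x => max (f x) 0) n (volume.restrict (ball 0 2)) :=
        eLpNorm_mono_measure _ hmono
    _ ≤ eLpNorm (fun x => max (f x) 0) p (volume.restrict (ball 0 2)) * H := by
        simpa only [H, Measure.restrict_apply_univ] using
          eLpNorm_le_eLpNorm_mul_rpow_measure_univ hp hf₀
    _ ≤ ENNReal.ofReal (κ * t₀) * H := by gcongr
    _ = κ * H * ENNReal.ofReal t₀ := by
        rw [ENNReal.ofReal_mul κ.coe_nonneg, ENNReal.ofReal_coe_nnreal]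
        ring
    _ ≤ ENNReal.ofReal η * ENNReal.ofReal t := by gcongr
    _ = ENNReal.ofReal (η * t) := (ENNReal.ofReal_mul hη.le).symm

theorem interior_weak_harnack_inequality_general (n : ℕ) [NeZero n] {lam Lam : ℝ} (hlam : 0 < lam)
    (hLam : lam ≤ Lam) {p q K : ℝ≥0∞} (hp : n ≤ p) (hq : n < q) (hK : K ≠ ∞) :
    ∃ ε c C : ℝ, 0 < ε ∧ 0 < c ∧ 0 < C ∧ ∀ b f u : EuclideanSpace ℝ (Fin n) → ℝ,
      AEStronglyMeasurable b (volume.restrict (ball 0 2)) →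
      AEStronglyMeasurable f (volume.restrict (ball 0 2)) →
      eLpNorm b q (volume.restrict (ball 0 2)) ≤ K →
      IsPucciSupersolution lam Lam b f u (ball 0 2) →
        ENNReal.ofReal c * (∫⁻ x in ball 0 1, ENNReal.ofReal (u x ^ ε)) ^ (1 / ε) ≤
          ENNReal.ofReal (⨅ x : ball (0 : EuclideanSpace ℝ (Fin n)) 1, u x) +
            ENNReal.ofReal C *
              eLpNorm (fun x => max (f x) 0) p (volume.restrict (ball 0 2)) := by
  obtain ⟨M, r₀, κ, δ, hM, hr₀, hr₀₁, hκ, hδ, hpoint⟩ := exists_pointToMeasure n hlam hLam hp hq hK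
  obtain ⟨ε, c, hε, hc, hint⟩ := exists_mul_lintegral_rpow_le_of_pointToMeasure
    (volume : Measure (EuclideanSpace ℝ (Fin n))) 0 hr₀ hr₀₁ hM hδ
  refine ⟨ε, c, κ⁻¹, hε, hc, inv_pos.2 hκ, fun b f u hb hf hbK hu => ?_⟩
  refine le_of_forall_gt_imp_ge_of_dense fun t ht => ?_
  rcases eq_or_ne t ∞ with rfl | ht_top
  · exact le_top
  lift t to ℝ≥0 using ht_top
  have ht₀ : 0 < (t : ℝ) := by exact_mod_cast (zero_le.trans_lt ht)
  have hf_le : eLpNorm (fun x => max (f x) 0) p (volume.restrict (ball 0 2)) ≤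
      ENNReal.ofReal (κ * t) := by
    rw [ENNReal.ofReal_mul hκ.le, ENNReal.ofReal_coe_nnreal]
    refine (ENNReal.inv_mul_le_iff (ENNReal.ofReal_pos.2 hκ).ne' ENNReal.ofReal_ne_top).1 ?_
    rw [← ENNReal.ofReal_inv_of_pos hκ]
    exact le_add_self.trans ht.le
  have hinf : ∃ x ∈ ball 0 1, u x ≤ t := by
    have : Nonempty (ball (0 : EuclideanSpace ℝ (Fin n)) 1) := ⟨0, mem_ball_self one_pos⟩
    rw [← ENNReal.ofReal_coe_nnreal (p := t)] at ht
    obtain ⟨x, hx⟩ := exists_lt_of_ciInf_lt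
      ((ENNReal.ofReal_lt_ofReal_iff ht₀).1 (le_self_add.trans_lt ht))
    exact ⟨x, x.2, hx.le⟩
  have hsub : ball (0 : EuclideanSpace ℝ (Fin n)) 1 ⊆ ball 0 2 := ball_subset_ball one_le_two
  have hcont : ContinuousOn u (ball 0 1) := fun x hx =>
    (hu.contDiffAt x (hsub hx)).continuousAt.continuousWithinAt
  have hcongr : ∫⁻ x in ball 0 1, ENNReal.ofReal (u x ^ ε) =
      ∫⁻ x in ball 0 1, ENNReal.ofReal (u x) ^ ε :=
    setLIntegral_congr_fun measurableSet_ball fun x hx =>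
      (ENNReal.ofReal_rpow_of_nonneg (hu.nonneg x (hsub hx)) hε.le).symm
  rw [hcongr, ← ENNReal.ofReal_coe_nnreal (p := t)]
  exact hint u t ht₀ hcont (hpoint b f u t ht₀ hb hf hbK hf_le hu) hinf

theorem LpNormE_eq_eLpNorm {n : ℕ} {p : ℝ} (hp : 0 < p) (g : EuclideanSpace ℝ (Fin n) → ℝ)
    (E : Set (EuclideanSpace ℝ (Fin n))) :
    LpNormE n p g E = eLpNorm g (ENNReal.ofReal p) (volume.restrict E) := by
  rw [eLpNorm_eq_lintegral_rpow_enorm_toReal (ENNReal.ofReal_pos.2 hp).ne' ENNReal.ofReal_ne_top,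
    ENNReal.toReal_ofReal hp.le, LpNormE]
  simp_rw [Real.enorm_eq_ofReal_abs, ENNReal.ofReal_rpow_of_nonneg (abs_nonneg _) hp.le]

end WeakHarnack

/-- Interior weak Harnack inequality. -/
theorem interior_weak_harnack_inequality
    (n : ℕ) (hn : 2 ≤ n) (lam Lam : ℝ) (hlam : 0 < lam) (hLam : lam ≤ Lam)
    (p q K : ℝ) (hq : (n : ℝ) < q) (hp : (n : ℝ) ≤ p) (hpq : p ≤ q) (hK : 0 < K) :
    ∃ ε c C : ℝ, 0 < ε ∧ 0 < c ∧ 0 < C ∧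
      ∀ b f u : EuclideanSpace ℝ (Fin n) → ℝ,
        ContinuousOn b (Metric.ball 0 2) →
        ContinuousOn f (Metric.ball 0 2) →
        (∀ x ∈ Metric.ball (0 : EuclideanSpace ℝ (Fin n)) 2, 0 ≤ b x) →
        LpNormE n q b (Metric.ball 0 2) ≤ ENNReal.ofReal K →
        ContDiffOn ℝ 2 u (Metric.ball 0 2) →
        (∀ x ∈ Metric.ball (0 : EuclideanSpace ℝ (Fin n)) 2, 0 ≤ u x) →
        (∀ x ∈ Metric.ball (0 : EuclideanSpace ℝ (Fin n)) 2,
          pucciMinus n lam Lam (hess n u x) - b x * gradNorm n u x ≤ f x) →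
        ENNReal.ofReal c *
            (∫⁻ x in Metric.ball (0 : EuclideanSpace ℝ (Fin n)) 1,
              ENNReal.ofReal (u x ^ ε)) ^ (1 / ε)
          ≤ ENNReal.ofReal (⨅ x : Metric.ball (0 : EuclideanSpace ℝ (Fin n)) 1, u x.1)
            + ENNReal.ofReal C * LpNormE n p (fun x => max (f x) 0) (Metric.ball 0 2) := by
  have : NeZero n := ⟨by omega⟩
  have hn₀ : (0 : ℝ) < n := Nat.cast_pos.2 (NeZero.pos n)
  simp_rw [LpNormE_eq_eLpNorm (hn₀.trans hq), LpNormE_eq_eLpNorm (hn₀.trans_le hp)]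
  obtain ⟨ε, c, C, hε, hc, hC, h⟩ := interior_weak_harnack_inequality_general n hlam hLam
    (ENNReal.natCast_le_ofReal (NeZero.ne n) |>.2 hp) (ENNReal.natCast_lt_ofReal.2 hq)
    (ENNReal.ofReal_ne_top (r := K))
  exact ⟨ε, c, C, hε, hc, hC, fun b f u hb hf _ hbK hu hu₀ hpde =>
    h b f u (hb.aestronglyMeasurable measurableSet_ball)
      (hf.aestronglyMeasurable measurableSet_ball) hbK
      ⟨fun x hx => hu.contDiffAt (isOpen_ball.mem_nhds hx), hu₀, hpde⟩⟩
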